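/- arXiv:2403.16589 — 4 statements merged into one kernel-verified Lean document; each statement's English description precedes it below -/
import Mathlib

section
/- For every ε > 0 there exists n₀ such that for all n ≥ n₀, the number of sumsets in F₂ⁿ satisfies (1−ε)·(2ⁿ−1)·2^(2^(n−1)) ≤ |𝒮ₙ| ≤ (1+ε)·(2ⁿ−1)·2^(2^(n−1)). (That is, |𝒮ₙ| ~ (2ⁿ−1)·2^(2^(n−1)).) -/
open Pointwise

/-- `V n` is the vector space `F₂ⁿ`. -/
abbrev V (n : ℕ) : Type := Fin n → ZMod 2

/-- `𝒮ₙ`: the family of sumsets `A + A` for `A ⊆ F₂ⁿ`. -/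
def sumsets (n : ℕ) : Finset (Finset (V n)) :=
  Finset.image (fun A : Finset (V n) => A + A) Finset.univ

/-!
Let `A ⊆ F₂ⁿ` and `C = (A + A)ᶜ`. No `x, y ∈ A` have `x + y ∈ C`, and averaging over the subgroup
annihilated by the large Fourier spectrum of `A` almost preserves this: it yields sets `A'`, `C'`
that depend on boundedly many linear forms, almost contain `A` and `C`, and still have a tiny
correlation. There are only `2 ^ O(n)` such sets, so if `A'` or `C'` has density clearly below
`1 / 2`, then `A` or `C` lies in a family exponentially smaller (in `2 ^ n`) than
`2 ^ 2 ^ (n - 1)`. Otherwise some Fourier coefficient of `C'` is close to its minimum `-1 / 2`, that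
is, `C'` contains almost all of an affine hyperplane avoiding `0`, which forces `A` to almost miss
the parallel linear hyperplane `H` or its complement. Either `A + A ⊇ H`, and at most
`(2 ^ n - 1) * 2 ^ 2 ^ (n - 1)` sets contain a linear hyperplane, or some `x ∈ H` is not in `A + A`:
then `A` contains at most one point of each pair `{y, y + x}`, which leaves about `3 ^ 2 ^ (n - 2)`
choices, again negligible.

Conversely, for every linear hyperplane `H` and almost every `B ⊆ Hᶜ` the set
`H ∪ B = ({0} ∪ B) + ({0} ∪ B)` is a sumset from which `H` and `B` can be recovered.
-/

namespace SumsetCount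

open Finset
open scoped BigOperators

section Counting

variable {α : Type*}

-- Chernoff: each counted `B` has weight `x ^ #B ≥ x ^ (δ * card α)`, and the weights of all sets
-- add up to `(1 + x) ^ card α`.
lemma card_filter_dens_le_le_exp [Fintype α] {x δ : ℝ} (hx₀ : 0 < x) (hx₁ : x ≤ 1) :
    (#{B : Finset α | (B.dens : ℝ) ≤ δ} : ℝ) ≤
      Real.exp ((x - δ * Real.log x) * Fintype.card α) := by
  have hweight : ∀ B ∈ ({B : Finset α | (B.dens : ℝ) ≤ δ} : Finset (Finset α)),
      Real.exp (Real.log x * (δ * Fintype.card α)) ≤ x ^ #B := by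
    intro B hB
    have hB : (#B : ℝ) ≤ δ * Fintype.card α := by
      rw [← nnratCast_dens_mul_natCast_card]
      exact mul_le_mul_of_nonneg_right (mem_filter.1 hB).2 (by positivity)
    rw [← Real.rpow_natCast, Real.rpow_def_of_pos hx₀, Real.exp_le_exp]
    exact mul_le_mul_of_nonpos_left hB (Real.log_nonpos hx₀.le hx₁)
  have hsum : #{B : Finset α | (B.dens : ℝ) ≤ δ} * Real.exp (Real.log x * (δ * Fintype.card α)) ≤
      Real.exp (x * Fintype.card α) :=
    calc _ ≤ ∑ B : Finset α with (B.dens : ℝ) ≤ δ, x ^ #B := by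
          simpa using card_nsmul_le_sum _ _ _ hweight
      _ ≤ ∑ B : Finset α, x ^ #B :=
          sum_le_sum_of_subset_of_nonneg (subset_univ _) fun _ _ _ ↦ by positivity
      _ = (x + 1) ^ Fintype.card α := by simpa using Fintype.sum_pow_mul_eq_add_pow α x 1
      _ ≤ Real.exp x ^ Fintype.card α :=
          pow_le_pow_left₀ (by positivity) (Real.add_one_le_exp x) _
      _ = Real.exp (x * Fintype.card α) := by rw [← Real.exp_nat_mul, mul_comm]
  rw [← le_div_iff₀ (Real.exp_pos _), ← Real.exp_sub] at hsum
  exact hsum.trans_eq (by ring_nf)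

lemma card_le_card_mul_card_of_forall_inter_sdiff [DecidableEq α] (X : Finset α)
    {F P Q : Finset (Finset α)}
    (hP : ∀ A ∈ F, A ∩ X ∈ P) (hQ : ∀ A ∈ F, A \ X ∈ Q) : #F ≤ #P * #Q := by
  rw [← card_product]
  refine card_le_card_of_injOn (fun A ↦ (A ∩ X, A \ X))
    (fun A hA ↦ mem_product.2 ⟨hP A hA, hQ A hA⟩) fun A _ B _ hAB ↦ ?_
  obtain ⟨hinter, hsdiff⟩ := Prod.mk.inj hAB
  rw [← sdiff_union_inter A X, ← sdiff_union_inter B X, hinter, hsdiff]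

end Counting

section Involution

variable {G : Type*} [AddCommGroup G] [Module (ZMod 2) G]

lemma add_add_cancel_self (x y : G) : x + y + y = x := by
  rw [add_assoc, ZModModule.add_self, add_zero]

variable [DecidableEq G]

lemma mem_add_self_iff {x : G} {A : Finset G} : x ∈ A + A ↔ ∃ y ∈ A, y + x ∈ A := by
  rw [mem_add]
  constructor
  · rintro ⟨y, hy, z, hz, rfl⟩
    exact ⟨y, hy, by rwa [← add_assoc, ZModModule.add_self, zero_add]⟩
  · rintro ⟨y, hy, hyx⟩
    exact ⟨y, hy, y + x, hyx, by rw [← add_assoc, ZModModule.add_self, zero_add]⟩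

lemma card_filter_notMem_add_self_le {X Y : Finset G} {x : G} (hXY : ∀ z ∈ X, z ∈ Y ∨ z + x ∈ Y) :
    #{B ∈ X.powerset | x ∉ B + B} ≤ 3 ^ #Y := by
  let trace (B : Finset G) (y : Y) : Bool × Bool := (decide (y.1 ∈ B), decide (y.1 + x ∈ B))
  have hcard : #(Fintype.piFinset fun _ : Y ↦
      ({(true, false), (false, true), (false, false)} : Finset (Bool × Bool))) = 3 ^ #Y := by simp
  rw [← hcard]
  refine card_le_card_of_injOn trace (fun B hB ↦ Fintype.mem_piFinset.2 fun y ↦ ?_) ?_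
  · have hy : ¬ (y.1 ∈ B ∧ y.1 + x ∈ B) := fun h ↦
      (mem_filter.1 hB).2 (mem_add_self_iff.2 ⟨y, h⟩)
    by_cases hyB : y.1 ∈ B <;> by_cases hyxB : y.1 + x ∈ B <;> simp_all [trace]
  · intro B hB B' hB' htrace
    have hpair (y : G) (hy : y ∈ Y) : (y ∈ B ↔ y ∈ B') ∧ (y + x ∈ B ↔ y + x ∈ B') := by
      simpa [trace] using congrFun htrace ⟨y, hy⟩
    have hagree (z : G) (hz : z ∈ X) : z ∈ B ↔ z ∈ B' := by
      rcases hXY z hz with hzY | hzY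
      · exact (hpair z hzY).1
      · simpa only [add_add_cancel_self] using (hpair _ hzY).2
    simp only [coe_filter, Set.mem_ofPred_eq, mem_powerset] at hB hB'
    ext z
    exact ⟨fun hz ↦ (hagree z (hB.1 hz)).1 hz, fun hz ↦ (hagree z (hB'.1 hz)).2 hz⟩

end Involution

section Indicator

variable {α : Type*}

/-- The indicator function of a finset, with real values. -/
noncomputable def ind (A : Finset α) : α → ℝ := (A : Set α).indicator 1

lemma ind_apply [DecidableEq α] (A : Finset α) (x : α) : ind A x = if x ∈ A then 1 else 0 := by
  simp [ind, Set.indicator_apply]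

lemma ind_nonneg (A : Finset α) (x : α) : 0 ≤ ind A x :=
  Set.indicator_nonneg (fun _ _ ↦ zero_le_one) x

lemma ind_sq (A : Finset α) (x : α) : ind A x ^ 2 = ind A x := by
  classical simp [ind_apply]

lemma ind_inter [DecidableEq α] (A B : Finset α) (x : α) : ind (A ∩ B) x = ind A x * ind B x := by
  rw [ind, coe_inter, Set.inter_indicator_one]
  rfl

lemma expect_ind [Fintype α] (A : Finset α) : 𝔼 x, ind A x = A.dens := expect_indicator_one A

end Indicator

section TripleCorr

variable {G : Type*} [AddCommGroup G] [Fintype G]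

/-- The normalised count of the solutions of `x + y = z` weighted by `f x * g y * h z`. -/
noncomputable def tripleCorr (f g h : G → ℝ) : ℝ := 𝔼 x, 𝔼 y, f x * g y * h (x + y)

lemma tripleCorr_smul (c : ℝ) (f g h : G → ℝ) :
    tripleCorr (c • f) (c • g) (c • h) = c ^ 3 * tripleCorr f g h := by
  simp only [tripleCorr, mul_expect, Pi.smul_apply, smul_eq_mul]
  exact expect_congr rfl fun x _ ↦ expect_congr rfl fun y _ ↦ by ring

lemma tripleCorr_le_tripleCorr {f f' g g' h h' : G → ℝ} (hf₀ : 0 ≤ f) (hg₀ : 0 ≤ g) (hh₀ : 0 ≤ h)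
    (hf : f ≤ f') (hg : g ≤ g') (hh : h ≤ h') : tripleCorr f g h ≤ tripleCorr f' g' h' :=
  expect_le_expect fun x _ ↦ expect_le_expect fun y _ ↦
    mul_le_mul (mul_le_mul (hf x) (hg y) (hg₀ y) ((hf₀ x).trans (hf x))) (hh _) (hh₀ _)
      (mul_nonneg ((hf₀ x).trans (hf x)) ((hg₀ y).trans (hg y)))

lemma tripleCorr_ind_eq_zero [DecidableEq G] {A B C : Finset G} (h : Disjoint (A + B) C) :
    tripleCorr (ind A) (ind B) (ind C) = 0 := by
  refine expect_eq_zero fun x _ ↦ expect_eq_zero fun y _ ↦ ?_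
  by_contra hxy
  simp only [ind_apply, mul_ite, mul_one, mul_zero, ite_eq_right_iff, Classical.not_imp]
    at hxy
  exact disjoint_left.1 h (add_mem_add hxy.2.2.1 hxy.2.1) hxy.1

end TripleCorr

section Fourier

variable {n : ℕ}

lemma eq_zero_or_eq_one (b : ZMod 2) : b = 0 ∨ b = 1 := by
  revert b
  decide

/-- The Walsh character `x ↦ (-1) ^ (a ⬝ᵥ x)` of `F₂ⁿ`. -/
def walsh (a : V n) : AddChar (V n) ℝ where
  toFun x := if a ⬝ᵥ x = 0 then 1 else -1
  map_zero_eq_one' := by simp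
  map_add_eq_mul' x y := by
    rw [dotProduct_add]
    rcases eq_zero_or_eq_one (a ⬝ᵥ x) with hx | hx <;>
      rcases eq_zero_or_eq_one (a ⬝ᵥ y) with hy | hy <;> simp [hx, hy, CharTwo.add_self_eq_zero]

lemma walsh_apply (a x : V n) : walsh a x = if a ⬝ᵥ x = 0 then 1 else -1 := rfl

lemma walsh_eq_one_iff {a x : V n} : walsh a x = 1 ↔ a ⬝ᵥ x = 0 := by
  rw [walsh_apply]
  split_ifs with h <;> norm_num [h]

lemma walsh_comm (a x : V n) : walsh a x = walsh x a := by
  simp only [walsh_apply, dotProduct_comm]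

lemma walsh_eq_zero_iff {a : V n} : walsh a = 0 ↔ a = 0 := by
  simp only [DFunLike.ext_iff, AddChar.zero_apply, walsh_eq_one_iff, dotProduct_eq_zero_iff]

lemma expect_walsh (a : V n) : 𝔼 x, walsh a x = if a = 0 then 1 else 0 := by
  simp [AddChar.expect_eq_ite, walsh_eq_zero_iff]

lemma sum_walsh (x : V n) : ∑ a, walsh a x = if x = 0 then (Fintype.card (V n) : ℝ) else 0 := by
  simp [walsh_comm _ x, AddChar.sum_eq_ite, walsh_eq_zero_iff]

/-- The Fourier transform on `F₂ⁿ`, normalised so that it averages over `x`. -/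
noncomputable def walshTransform (f : V n → ℝ) (a : V n) : ℝ := 𝔼 x, f x * walsh a x

lemma walshTransform_zero (f : V n → ℝ) : walshTransform f 0 = 𝔼 x, f x := by
  simp [walshTransform, walsh_apply]

lemma sum_walshTransform_mul_walsh (f : V n → ℝ) (x : V n) :
    ∑ a, walshTransform f a * walsh a x = f x := by
  calc ∑ a, walshTransform f a * walsh a x
      = 𝔼 y, ∑ a, f y * walsh a (y + x) := by
        simp only [walshTransform, expect_mul, mul_assoc, ← AddChar.map_add_eq_mul]
        rw [expect_sum_comm]
    _ = 𝔼 y, if y = x then f y * Fintype.card (V n) else 0 := by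
        simp only [← mul_sum, sum_walsh, mul_ite, mul_zero, add_eq_zero_iff_eq_neg,
          ZModModule.neg_eq_self]
    _ = f x := by
        rw [Fintype.expect_eq_sum_div_card, Fintype.sum_ite_eq', mul_div_cancel_right₀]
        positivity

theorem sum_walshTransform_sq (f : V n → ℝ) : ∑ a, walshTransform f a ^ 2 = 𝔼 x, f x ^ 2 := by
  calc ∑ a, walshTransform f a ^ 2 = 𝔼 x, ∑ a, walshTransform f a * (f x * walsh a x) := by
        rw [expect_sum_comm]
        simp only [sq, ← mul_expect, walshTransform]
    _ = 𝔼 x, f x ^ 2 := by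
        refine expect_congr rfl fun x _ ↦ ?_
        simp only [mul_left_comm _ (f x), ← mul_sum, sum_walshTransform_mul_walsh, sq]

theorem sum_walshTransform_mul_mul (f g h : V n → ℝ) :
    ∑ a, walshTransform f a * walshTransform g a * walshTransform h a = tripleCorr f g h := by
  calc ∑ a, walshTransform f a * walshTransform g a * walshTransform h a
      = ∑ a, 𝔼 x, 𝔼 y, (f x * walsh a x) * (g y * walsh a y) * walshTransform h a := by
        simp only [← expect_mul, ← mul_expect, walshTransform]
    _ = 𝔼 x, 𝔼 y, ∑ a, (f x * walsh a x) * (g y * walsh a y) * walshTransform h a := by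
        simp only [expect_sum_comm]
    _ = 𝔼 x, 𝔼 y, f x * g y * ∑ a, walshTransform h a * walsh a (x + y) := by
        simp only [mul_sum, AddChar.map_add_eq_mul]
        exact expect_congr rfl fun x _ ↦ expect_congr rfl fun y _ ↦ sum_congr rfl fun a _ ↦ by ring
    _ = tripleCorr f g h := by simp only [sum_walshTransform_mul_walsh, tripleCorr]

lemma sq_mul_card_filter_lt_abs_walshTransform_le (f : V n → ℝ) {η : ℝ} (hη : 0 ≤ η) :
    η ^ 2 * #{a | η < |walshTransform f a|} ≤ 𝔼 x, f x ^ 2 := by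
  rw [← sum_walshTransform_sq, mul_comm, ← nsmul_eq_mul]
  refine (card_nsmul_le_sum _ _ _ fun a ha ↦ ?_).trans
    (sum_le_sum_of_subset_of_nonneg (subset_univ _) fun a _ _ ↦ sq_nonneg _)
  rw [← sq_abs (walshTransform f a)]
  exact pow_le_pow_left₀ hη (mem_filter.1 ha).2.le 2

end Fourier

section CosetAverage

variable {G : Type*} [AddCommGroup G] (H : AddSubgroup G) [Fintype H]

/-- The average of `f` over the coset `x + H`, as a function of `x`. -/
noncomputable def cosetAvg (f : G → ℝ) (x : G) : ℝ := 𝔼 v : H, f (x + v)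

variable {H}

lemma cosetAvg_add {v : G} (hv : v ∈ H) (f : G → ℝ) (x : G) :
    cosetAvg H f (x + v) = cosetAvg H f x :=
  Fintype.expect_equiv (Equiv.addLeft ⟨v, hv⟩) _ _ fun w ↦ by simp [add_assoc]

lemma cosetAvg_eq_self {f : G → ℝ} (hf : ∀ x, ∀ v ∈ H, f (x + v) = f x) : cosetAvg H f = f := by
  ext x
  simp [cosetAvg, hf x]

lemma cosetAvg_nonneg {f : G → ℝ} (hf : 0 ≤ f) : 0 ≤ cosetAvg H f :=
  fun _ ↦ expect_nonneg fun _ _ ↦ hf _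

lemma cosetAvg_addChar_apply (ψ : AddChar G ℝ) (x : G) :
    cosetAvg H ψ x = ψ x * 𝔼 v : H, ψ v := by
  simp only [cosetAvg, AddChar.map_add_eq_mul, mul_expect]

variable [Fintype G]

lemma expect_cosetAvg_mul (f g : G → ℝ) :
    𝔼 x, cosetAvg H f x * g x = 𝔼 x, f x * cosetAvg H g x := by
  simp only [cosetAvg, expect_mul, mul_expect]
  rw [expect_comm, expect_comm (s := univ (α := G))]
  exact Fintype.expect_equiv (Equiv.neg H) _ _ fun v ↦
    Fintype.expect_equiv (Equiv.addRight (v : G)) _ _ fun x ↦ by simp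

variable (H) in
/-- The union of the cosets of `H` in which `A` has relative density at least `δ`. -/
noncomputable def popular (A : Finset G) (δ : ℝ) : Finset G := {x | δ ≤ cosetAvg H (ind A) x}

lemma mem_popular {A : Finset G} {δ : ℝ} {x : G} :
    x ∈ popular H A δ ↔ δ ≤ cosetAvg H (ind A) x := by simp [popular]

lemma add_mem_popular_iff {A : Finset G} {δ : ℝ} {x v : G} (hv : v ∈ H) :
    x + v ∈ popular H A δ ↔ x ∈ popular H A δ := by
  rw [mem_popular, mem_popular, cosetAvg_add hv]

lemma smul_ind_popular_le {A : Finset G} {δ : ℝ} :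
    δ • ind (popular H A δ) ≤ cosetAvg H (ind A) := by
  classical
  intro x
  by_cases hx : x ∈ popular H A δ
  · simpa [ind_apply, hx] using mem_popular.1 hx
  · simpa [ind_apply, hx] using cosetAvg_nonneg (ind_nonneg A) x

lemma dens_sdiff_popular_le [DecidableEq G] (A : Finset G) {δ : ℝ} (hδ : 0 ≤ δ) :
    ((A \ popular H A δ).dens : ℝ) ≤ δ := by
  calc ((A \ popular H A δ).dens : ℝ)
      = 𝔼 x, ind A x * cosetAvg H (ind (popular H A δ)ᶜ) x := by
        rw [← expect_ind, cosetAvg_eq_self]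
        · exact expect_congr rfl fun x _ ↦ by rw [sdiff_eq_inter_compl, ind_inter]
        · intro x v hv
          simp only [ind_apply, mem_compl, add_mem_popular_iff hv]
    _ = 𝔼 x, cosetAvg H (ind A) x * ind (popular H A δ)ᶜ x := (expect_cosetAvg_mul _ _).symm
    _ ≤ δ := expect_le univ_nonempty fun x _ ↦ by
        by_cases hx : x ∈ popular H A δ
        · simpa [ind_apply, hx] using hδ
        · simpa [ind_apply, hx] using (not_le.1 (mem_popular.not.1 hx)).le

end CosetAverage

section Container

variable {n : ℕ}

lemma walshTransform_cosetAvg (H : AddSubgroup (V n)) [Fintype H] (f : V n → ℝ) (a : V n) :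
    walshTransform (cosetAvg H f) a = walshTransform f a * 𝔼 v : H, walsh a v := by
  simp only [walshTransform, expect_cosetAvg_mul, cosetAvg_addChar_apply, expect_mul, mul_assoc]

lemma expect_walsh_subgroup_eq_zero_or_one (H : AddSubgroup (V n)) [Fintype H] (a : V n) :
    𝔼 v : H, walsh a v = 0 ∨ 𝔼 v : H, walsh a v = 1 := by
  have h := AddChar.expect_eq_ite ((walsh a).compAddMonoidHom H.subtype)
  simp only [AddChar.compAddMonoidHom_apply, AddSubgroup.subtype_apply] at h
  rw [h]
  split_ifs <;> simp

-- Averaging over `H` keeps the Fourier coefficients at the characters that are trivial on `H` and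
-- kills the others.
lemma tripleCorr_cosetAvg_le {H : AddSubgroup (V n)} [Fintype H] {f g h : V n → ℝ} {η : ℝ}
    (hη : 0 ≤ η) (hH : ∀ a, η < |walshTransform f a| → ∀ v ∈ H, walsh a v = 1) :
    tripleCorr (cosetAvg H f) (cosetAvg H g) (cosetAvg H h) ≤
      tripleCorr f g h + η * ((𝔼 x, g x ^ 2 + 𝔼 x, h x ^ 2) / 2) := by
  simp only [← sum_walshTransform_sq, ← sum_walshTransform_mul_mul, ← sum_add_distrib, sum_div,
    mul_sum]
  refine sum_le_sum fun a _ ↦ ?_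
  simp only [walshTransform_cosetAvg]
  set F := walshTransform f a
  set Φ := walshTransform g a
  set Ψ := walshTransform h a
  have hΦΨ : |Φ * Ψ| ≤ (Φ ^ 2 + Ψ ^ 2) / 2 := by
    rw [abs_le]
    constructor <;> nlinarith [sq_nonneg (Φ + Ψ), sq_nonneg (Φ - Ψ)]
  rcases expect_walsh_subgroup_eq_zero_or_one H a with hdies | hstays
  · have hF : |F| ≤ η := by
      refine not_lt.1 fun hlt ↦ zero_ne_one (α := ℝ) ?_
      rw [← hdies, expect_congr rfl fun (v : H) _ ↦ hH a hlt v v.2, Fintype.expect_const]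
    have hbound : |F * (Φ * Ψ)| ≤ η * ((Φ ^ 2 + Ψ ^ 2) / 2) := by
      rw [abs_mul]
      exact mul_le_mul hF hΦΨ (abs_nonneg _) hη
    rw [hdies]
    linarith [neg_abs_le (F * (Φ * Ψ))]
  · rw [hstays]
    nlinarith [mul_nonneg hη ((abs_nonneg _).trans hΦΨ)]

/-- The subsets of `F₂ⁿ` that depend on `m` linear forms only; the rows of the matrix are these
forms. -/
def linearJuntas (m n : ℕ) : Finset (Finset (V n)) :=
  univ.image fun p : Matrix (Fin m) (Fin n) (ZMod 2) × Finset (V m) ↦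
    ({x | p.1.mulVec x ∈ p.2} : Finset (V n))

lemma card_linearJuntas_le (m n : ℕ) : #(linearJuntas m n) ≤ (2 ^ n) ^ m * 2 ^ 2 ^ m := by
  refine card_image_le.trans_eq ?_
  rw [card_univ, Fintype.card_prod, Fintype.card_congr Matrix.of.symm]
  simp

lemma mem_linearJuntas {m : ℕ} (M : Matrix (Fin m) (Fin n) (ZMod 2)) {S : Finset (V n)}
    (hS : ∀ x v, M.mulVec v = 0 → (x + v ∈ S ↔ x ∈ S)) : S ∈ linearJuntas m n := by
  refine mem_image.2 ⟨(M, S.image M.mulVec), mem_univ _, ?_⟩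
  ext x
  simp only [mem_filter_univ, mem_image]
  constructor
  · rintro ⟨y, hy, hyx⟩
    have hker : M.mulVec (x - y) = 0 := by rw [Matrix.mulVec_sub, hyx, sub_self]
    simpa using (hS y _ hker).2 hy
  · exact fun hx ↦ ⟨x, hx, rfl⟩

lemma exists_forall_mem_range_of_card_le {α : Type*} [Nonempty α] {S : Finset α} {m : ℕ}
    (hS : #S ≤ m) : ∃ f : Fin m → α, ∀ a ∈ S, a ∈ Set.range f := by
  obtain ⟨e⟩ : Nonempty (S ↪ Fin m) := Function.Embedding.nonempty_of_card_le (by simpa using hS)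
  exact ⟨Function.extend e (↑) fun _ ↦ Classical.arbitrary α,
    fun a ha ↦ ⟨e ⟨a, ha⟩, e.injective.extend_apply _ _ _⟩⟩

lemma card_filter_lt_abs_walshTransform_ind_le (A : Finset (V n)) {η : ℝ} (hη : 0 < η) :
    #{a | η < |walshTransform (ind A) a|} ≤ ⌈1 / η ^ 2⌉₊ := by
  have h := sq_mul_card_filter_lt_abs_walshTransform_le (ind A) hη.le
  simp only [ind_sq, expect_ind] at h
  have hdens : (A.dens : ℝ) ≤ 1 := mod_cast A.dens_le_one
  refine Nat.cast_le.1 (LE.le.trans ?_ (Nat.le_ceil (1 / η ^ 2 : ℝ)))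
  rw [le_div_iff₀ (by positivity)]
  linarith

theorem exists_linearJuntas_container {δ θ : ℝ} (hδ : 0 < δ) (hθ : 0 < θ) :
    ∃ m : ℕ, ∀ (n : ℕ) (A C : Finset (V n)), Disjoint (A + A) C →
      ∃ A' ∈ linearJuntas m n, ∃ C' ∈ linearJuntas m n,
        (A \ A').dens ≤ δ ∧ (C \ C').dens ≤ δ ∧ tripleCorr (ind A') (ind A') (ind C') ≤ θ := by
  classical
  set η := θ * δ ^ 3
  have hη : 0 < η := by positivity
  refine ⟨⌈1 / η ^ 2⌉₊, fun n A C hAC ↦ ?_⟩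
  obtain ⟨M, hM⟩ :=
    exists_forall_mem_range_of_card_le (card_filter_lt_abs_walshTransform_ind_le A hη)
  let H : AddSubgroup (V n) := (Matrix.of M).mulVecLin.ker.toAddSubgroup
  have mem_H {v : V n} : v ∈ H ↔ (Matrix.of M).mulVec v = 0 := by simp [H]
  have hH (a : V n) (ha : η < |walshTransform (ind A) a|) (v : V n) (hv : v ∈ H) :
      walsh a v = 1 := by
    obtain ⟨i, rfl⟩ := hM a (by simpa using ha)
    exact walsh_eq_one_iff.2 (congrFun (mem_H.1 hv) i)
  have hjunta (S : Finset (V n)) : popular H S δ ∈ linearJuntas ⌈1 / η ^ 2⌉₊ n :=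
    mem_linearJuntas (Matrix.of M) fun x v hv ↦ add_mem_popular_iff (mem_H.2 hv)
  refine ⟨_, hjunta A, _, hjunta C, ?_⟩
  have hdens (S : Finset (V n)) : (S.dens : ℝ) ≤ 1 := mod_cast S.dens_le_one
  have hcorr : δ ^ 3 * tripleCorr (ind (popular H A δ)) (ind (popular H A δ))
      (ind (popular H C δ)) ≤ δ ^ 3 * θ :=
    calc _ ≤ tripleCorr (cosetAvg H (ind A)) (cosetAvg H (ind A)) (cosetAvg H (ind C)) := by
          rw [← tripleCorr_smul]
          exact tripleCorr_le_tripleCorr (smul_nonneg hδ.le (ind_nonneg _))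
            (smul_nonneg hδ.le (ind_nonneg _)) (smul_nonneg hδ.le (ind_nonneg _))
            smul_ind_popular_le smul_ind_popular_le smul_ind_popular_le
      _ ≤ η * ((A.dens + C.dens) / 2) := by
          simpa [ind_sq, expect_ind, tripleCorr_ind_eq_zero hAC] using
            tripleCorr_cosetAvg_le (g := ind A) (h := ind C) hη.le hH
      _ ≤ δ ^ 3 * θ := by nlinarith [hdens A, hdens C]
  exact ⟨dens_sdiff_popular_le A hδ.le, dens_sdiff_popular_le C hδ.le,
    le_of_mul_le_mul_left hcorr (by positivity)⟩

end Container

section Hyperplane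

variable {n : ℕ} {a : V n}

/-- The affine hyperplane `a ⬝ᵥ x = b` of `F₂ⁿ` (when `a ≠ 0`). -/
def hyperplane (a : V n) (b : ZMod 2) : Finset (V n) := {x | a ⬝ᵥ x = b}

@[simp] lemma mem_hyperplane {b : ZMod 2} {x : V n} : x ∈ hyperplane a b ↔ a ⬝ᵥ x = b := by
  simp [hyperplane]

lemma ind_hyperplane_zero_add_one (a x : V n) :
    ind (hyperplane a 0) x + ind (hyperplane a 1) x = 1 := by
  rcases eq_zero_or_eq_one (a ⬝ᵥ x) with hx | hx <;> simp [ind_apply, hx]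

lemma ind_hyperplane_zero_sub_one (a x : V n) :
    ind (hyperplane a 0) x - ind (hyperplane a 1) x = walsh a x := by
  rcases eq_zero_or_eq_one (a ⬝ᵥ x) with hx | hx <;> simp [ind_apply, walsh_apply, hx]

lemma ind_hyperplane_one_add (a x y : V n) :
    ind (hyperplane a 1) (x + y) =
      ind (hyperplane a 0) x * ind (hyperplane a 1) y +
        ind (hyperplane a 1) x * ind (hyperplane a 0) y := by
  rcases eq_zero_or_eq_one (a ⬝ᵥ x) with hx | hx <;>
    rcases eq_zero_or_eq_one (a ⬝ᵥ y) with hy | hy <;>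
      simp [ind_apply, dotProduct_add, hx, hy, CharTwo.add_self_eq_zero]

lemma dens_inter_hyperplane_zero_add_one (A : Finset (V n)) (a : V n) :
    ((A ∩ hyperplane a 0).dens : ℝ) + (A ∩ hyperplane a 1).dens = A.dens := by
  simp only [← expect_ind, ind_inter, ← expect_add_distrib, ← mul_add,
    ind_hyperplane_zero_add_one, mul_one]

lemma walshTransform_ind (A : Finset (V n)) (a : V n) :
    walshTransform (ind A) a = (A ∩ hyperplane a 0).dens - (A ∩ hyperplane a 1).dens := by
  simp only [← expect_ind, ind_inter, ← expect_sub_distrib, ← mul_sub,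
    ind_hyperplane_zero_sub_one, walshTransform]

lemma dens_hyperplane (ha : a ≠ 0) (b : ZMod 2) : ((hyperplane a b).dens : ℝ) = 1 / 2 := by
  have hsum : ((hyperplane a 0).dens : ℝ) + (hyperplane a 1).dens = 1 := by
    simpa using dens_inter_hyperplane_zero_add_one univ a
  have hdiff : ((hyperplane a 0).dens : ℝ) - (hyperplane a 1).dens = 0 := by
    simp only [← expect_ind, ← expect_sub_distrib, ind_hyperplane_zero_sub_one, expect_walsh,
      if_neg ha]
  rcases eq_zero_or_eq_one b with rfl | rfl <;> linarith

lemma two_mul_card_hyperplane (ha : a ≠ 0) (b : ZMod 2) : 2 * #(hyperplane a b) = 2 ^ n := by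
  have h := nnratCast_dens_mul_natCast_card (𝕜 := ℝ) (hyperplane a b)
  rw [dens_hyperplane ha] at h
  have h' : (2 * #(hyperplane a b) : ℝ) = 2 ^ n := by
    rw [← h]
    simp
  exact_mod_cast h'

lemma card_hyperplane (ha : a ≠ 0) (b : ZMod 2) : #(hyperplane a b) = 2 ^ (n - 1) := by
  obtain rfl | ⟨n, rfl⟩ : n = 0 ∨ ∃ k, n = k + 1 := by cases n <;> simp
  · exact absurd (Subsingleton.elim a 0) ha
  · have h := two_mul_card_hyperplane ha b
    rw [pow_succ'] at h
    exact Nat.eq_of_mul_eq_mul_left two_pos h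

lemma eq_of_hyperplane_zero_subset {a' : V n} (ha : a ≠ 0) (ha' : a' ≠ 0)
    (h : hyperplane a 0 ⊆ hyperplane a' 0) : a = a' := by
  have heq : hyperplane a 0 = hyperplane a' 0 :=
    eq_of_subset_of_card_le h (by rw [card_hyperplane ha, card_hyperplane ha'])
  refine dotProduct_eq_iff.1 fun x ↦ ?_
  have hx := Finset.ext_iff.1 heq x
  rw [mem_hyperplane, mem_hyperplane] at hx
  rcases eq_zero_or_eq_one (a ⬝ᵥ x) with h₁ | h₁ <;>
    rcases eq_zero_or_eq_one (a' ⬝ᵥ x) with h₂ | h₂ <;> simp_all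

end Hyperplane

section Stability

lemma tripleCorr_ind_le_add_dens_sdiff {G : Type*} [AddCommGroup G] [Fintype G] [DecidableEq G]
    (A B C D : Finset G) :
    tripleCorr (ind A) (ind B) (ind D) ≤ tripleCorr (ind A) (ind B) (ind C) + (D \ C).dens := by
  have hdens : ((D \ C).dens : ℝ) = 𝔼 x : G, 𝔼 y : G, ind (D \ C) (x + y) := by
    rw [← Fintype.expect_const (ι := G) ((D \ C).dens : ℝ)]
    refine expect_congr rfl fun x _ ↦ ?_
    rw [← expect_ind]
    exact Fintype.expect_equiv (Equiv.addLeft (-x)) _ _ fun y ↦ by simp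
  simp only [hdens, tripleCorr, ← expect_add_distrib]
  refine expect_le_expect fun x _ ↦ expect_le_expect fun y _ ↦ ?_
  simp only [ind_apply, mem_sdiff]
  split_ifs <;> simp_all

variable {n : ℕ}

lemma sq_mul_sub_le_tripleCorr {f g : V n → ℝ} {κ : ℝ} (hg : ∀ a ≠ 0, -κ ≤ walshTransform g a) :
    (𝔼 x, f x) ^ 2 * 𝔼 x, g x - κ * (𝔼 x, f x ^ 2 - (𝔼 x, f x) ^ 2) ≤ tripleCorr f f g := by
  have hnonneg : 0 ≤ ∑ a ∈ univ.erase (0 : V n),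
      (walshTransform f a * walshTransform f a * walshTransform g a
        + κ * walshTransform f a ^ 2) :=
    sum_nonneg fun a ha ↦ by
      nlinarith [mul_nonneg (sq_nonneg (walshTransform f a))
        (neg_le_iff_add_nonneg.1 (hg a (ne_of_mem_erase ha)))]
  have hsum := add_sum_erase univ (fun a ↦
    walshTransform f a * walshTransform f a * walshTransform g a + κ * walshTransform f a ^ 2)
    (mem_univ 0)
  rw [sum_add_distrib (s := univ), ← mul_sum, sum_walshTransform_sq, sum_walshTransform_mul_mul]
    at hsum
  simp only [walshTransform_zero] at hsum
  nlinarith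

lemma two_mul_dens_mul_dens_eq_tripleCorr (A : Finset (V n)) (a : V n) :
    2 * ((A ∩ hyperplane a 0).dens * (A ∩ hyperplane a 1).dens : ℝ) =
      tripleCorr (ind A) (ind A) (ind (hyperplane a 1)) := by
  have hcross (b c : ZMod 2) : ((A ∩ hyperplane a b).dens * (A ∩ hyperplane a c).dens : ℝ) =
      𝔼 x, 𝔼 y, ind A x * ind A y * (ind (hyperplane a b) x * ind (hyperplane a c) y) := by
    simp only [← expect_ind, ind_inter, Fintype.expect_mul_expect, mul_mul_mul_comm]
  rw [two_mul]
  nth_rw 2 [mul_comm]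
  simp only [hcross, ← expect_add_distrib, tripleCorr, ind_hyperplane_one_add, mul_add]

lemma exists_dens_hyperplane_one_sdiff_le {A C : Finset (V n)} (hA : 4995 / 10000 ≤ (A.dens : ℝ))
    (hC : 4995 / 10000 ≤ (C.dens : ℝ))
    (hAC : tripleCorr (ind A) (ind A) (ind C) ≤ 1 / 100000) :
    ∃ a ≠ 0, ((hyperplane a 1 \ C).dens : ℝ) ≤ 1 / 600 := by
  -- With densities exactly `1 / 2` and correlation `0`, the bound `sq_mul_sub_le_tripleCorr`
  -- already fails for every `κ < 1 / 2`; the value `1 / 2 - 1 / 600` absorbs the three error terms.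
  obtain ⟨a, ha, hlt⟩ : ∃ a ≠ 0, walshTransform (ind C) a < -(1 / 2 - 1 / 600) := by
    by_contra! hC'
    have h := sq_mul_sub_le_tripleCorr (f := ind A) hC'
    simp only [ind_sq, expect_ind] at h
    nlinarith [mul_nonneg (sub_nonneg.2 hA) (sub_nonneg.2 hC),
      mul_le_mul_of_nonneg_left hC (sq_nonneg (A.dens : ℝ))]
  refine ⟨a, ha, ?_⟩
  have hsplit : ((hyperplane a 1 ∩ C).dens : ℝ) + (hyperplane a 1 \ C).dens = 1 / 2 := by
    rw [← dens_hyperplane ha 1]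
    exact_mod_cast dens_inter_add_dens_sdiff _ _
  rw [walshTransform_ind, inter_comm C (hyperplane a 1)] at hlt
  have hpos : (0 : ℝ) ≤ (C ∩ hyperplane a 0).dens := by positivity
  linarith

theorem exists_dens_inter_hyperplane_le {A C : Finset (V n)} (hA : 4995 / 10000 ≤ (A.dens : ℝ))
    (hC : 4995 / 10000 ≤ (C.dens : ℝ))
    (hAC : tripleCorr (ind A) (ind A) (ind C) ≤ 1 / 100000) :
    ∃ a ≠ 0, ∃ b, ((A ∩ hyperplane a b).dens : ℝ) ≤ 1 / 260 := by
  obtain ⟨a, ha, hdens⟩ := exists_dens_hyperplane_one_sdiff_le hA hC hAC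
  have hsum := dens_inter_hyperplane_zero_add_one A a
  have hprod := two_mul_dens_mul_dens_eq_tripleCorr A a
  have hcorr := tripleCorr_ind_le_add_dens_sdiff A A C (hyperplane a 1)
  refine ⟨a, ha, ?_⟩
  by_contra! hlarge
  nlinarith [mul_pos (sub_pos.2 (hlarge 0)) (sub_pos.2 (hlarge 1))]

end Stability

section Exceptional

variable {n : ℕ}

/-- The bound for the size of the exceptional families: it is exponentially smaller, in `2 ^ n`,
than the main term `2 ^ 2 ^ (n - 1) = exp (log 2 / 2 * 2 ^ n)`. -/
noncomputable def negl (n : ℕ) : ℝ := Real.exp ((Real.log 2 / 2 - 1 / 10000) * 2 ^ n)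

lemma exp_mul_two_pow_le_negl {c : ℝ} (hc : c ≤ Real.log 2 / 2 - 1 / 10000) :
    Real.exp (c * 2 ^ n) ≤ negl n :=
  Real.exp_le_exp.2 (mul_le_mul_of_nonneg_right hc (by positivity))

lemma card_filter_dens_le_le_exp_two_pow (k : ℕ) (δ : ℝ) :
    (#{B : Finset (V n) | (B.dens : ℝ) ≤ δ} : ℝ) ≤
      Real.exp ((2⁻¹ ^ k + δ * (k * Real.log 2)) * 2 ^ n) := by
  have h := card_filter_dens_le_le_exp (α := V n) (x := 2⁻¹ ^ k) (δ := δ) (by positivity)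
    (pow_le_one₀ (by norm_num) (by norm_num))
  simpa [Real.log_inv] using h

lemma card_filter_notMem_add_self_le_exp {X : Finset (V n)} {x : V n} (hx : x ≠ 0)
    (hX : ∀ z ∈ X, z + x ∈ X) :
    (#{B ∈ X.powerset | x ∉ B + B} : ℝ) ≤ Real.exp (Real.log 3 / 2 * #X) := by
  obtain ⟨i, hi⟩ : ∃ i, x i = 1 := by
    obtain ⟨i, hi⟩ := Function.ne_iff.1 hx
    exact ⟨i, (eq_zero_or_eq_one _).resolve_left hi⟩
  let Y : Finset (V n) := {y ∈ X | y i = 0}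
  have hflip (z : V n) : (z + x) i = 0 ↔ z i ≠ 0 := by
    rcases eq_zero_or_eq_one (z i) with hz | hz <;> simp [hi, hz, CharTwo.add_self_eq_zero]
  have hXY : ∀ z ∈ X, z ∈ Y ∨ z + x ∈ Y := fun z hz ↦ by
    simp only [Y, mem_filter, hz, hX z hz, hflip, true_and]
    exact em _
  have hYX : 2 * #Y ≤ #X := by
    rw [← card_filter_add_card_filter_not (s := X) (fun y ↦ y i = 0), two_mul]
    refine Nat.add_le_add_left (card_le_card_of_injOn (· + x) (fun y hy ↦ ?_)
      (add_left_injective x).injOn) _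
    have hy' := mem_filter.1 hy
    exact mem_filter.2 ⟨hX y hy'.1, fun h ↦ (hflip y).1 h hy'.2⟩
  have hYX' : (2 * #Y : ℝ) ≤ #X := mod_cast hYX
  calc (#{B ∈ X.powerset | x ∉ B + B} : ℝ) ≤ 3 ^ #Y := by
        exact_mod_cast card_filter_notMem_add_self_le hXY
    _ = Real.exp (Real.log 3 * #Y) := by
        rw [← Real.rpow_natCast, Real.rpow_def_of_pos (by norm_num)]
    _ ≤ Real.exp (Real.log 3 / 2 * #X) :=
        Real.exp_le_exp.2 (by nlinarith [Real.log_pos (by norm_num : (1 : ℝ) < 3)])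

lemma card_hyperplane_subsets_notMem_add_self_le {a x : V n} (ha : a ≠ 0) (b : ZMod 2)
    (hx : x ∈ hyperplane a 0) :
    (#{B ∈ (hyperplane a b).powerset | x ∉ B + B} : ℝ) ≤ Real.exp (275 / 1000 * 2 ^ n) := by
  obtain rfl | hx₀ := eq_or_ne x 0
  · have hempty : ({B ∈ (hyperplane a b).powerset | (0 : V n) ∉ B + B} : Finset _) ⊆ {∅} := by
      intro B hB
      refine mem_singleton.2 (eq_empty_of_forall_notMem fun y hy ↦ (mem_filter.1 hB).2 ?_)
      exact mem_add_self_iff.2 ⟨y, hy, by rwa [add_zero]⟩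
    calc (#{B ∈ (hyperplane a b).powerset | (0 : V n) ∉ B + B} : ℝ) ≤ 1 := by
          exact_mod_cast card_le_card hempty
      _ ≤ Real.exp (275 / 1000 * 2 ^ n) := Real.one_le_exp (by positivity)
  · have hinv (z : V n) (hz : z ∈ hyperplane a b) : z + x ∈ hyperplane a b := by
      simp_all [dotProduct_add]
    have hcard : (2 * #(hyperplane a b) : ℝ) = 2 ^ n := mod_cast two_mul_card_hyperplane ha b
    refine (card_filter_notMem_add_self_le_exp hx₀ hinv).trans (Real.exp_le_exp.2 ?_)
    nlinarith [Real.log_three_lt_d9, pow_pos (two_pos (α := ℝ)) n]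

lemma card_filter_dens_sdiff_le {Z : Finset (V n)} (hZ : (Z.dens : ℝ) ≤ 4995 / 10000) :
    (#{A : Finset (V n) | ((A \ Z).dens : ℝ) ≤ 1 / 100000} : ℝ) ≤ negl n := by
  have hsplit := card_le_card_mul_card_of_forall_inter_sdiff Z
    (F := {A : Finset (V n) | ((A \ Z).dens : ℝ) ≤ 1 / 100000}) (P := Z.powerset)
    (Q := {B : Finset (V n) | (B.dens : ℝ) ≤ 1 / 100000}) (fun A _ ↦ by simp) (by simp)
  have hZ' : (#Z.powerset : ℝ) ≤ Real.exp (Real.log 2 * (4995 / 10000) * 2 ^ n) := by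
    have hcard : (#Z : ℝ) ≤ 4995 / 10000 * 2 ^ n := by
      rw [← nnratCast_dens_mul_natCast_card]
      simpa using mul_le_mul_of_nonneg_right hZ (Nat.cast_nonneg (Fintype.card (V n)))
    rw [card_powerset, Nat.cast_pow, ← Real.rpow_natCast, Real.rpow_def_of_pos (by norm_num)]
    exact Real.exp_le_exp.2 (by nlinarith [Real.log_pos one_lt_two])
  have hsparse := card_filter_dens_le_le_exp_two_pow (n := n) 14 (1 / 100000)
  refine (Nat.cast_le.2 hsplit).trans ?_
  rw [Nat.cast_mul]
  refine (mul_le_mul hZ' hsparse (Nat.cast_nonneg _) (Real.exp_pos _).le).trans ?_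
  rw [← Real.exp_add, ← add_mul]
  refine exp_mul_two_pow_le_negl ?_
  push_cast
  linarith [Real.log_two_gt_d9]

lemma card_filter_dens_inter_hyperplane_le {a x : V n} (ha : a ≠ 0) (b : ZMod 2)
    (hx : x ∈ hyperplane a 0) :
    (#{A : Finset (V n) | ((A ∩ hyperplane a b).dens : ℝ) ≤ 1 / 250 ∧ x ∉ A + A} : ℝ) ≤
      negl n := by
  have hsdiff (A : Finset (V n)) : A \ hyperplane a b ⊆ hyperplane a (b + 1) := by
    have hneg : ∀ b c : ZMod 2, c ≠ b → c = b + 1 := by decide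
    intro y hy
    rw [mem_sdiff, mem_hyperplane] at hy
    exact mem_hyperplane.2 (hneg _ _ hy.2)
  have hsplit := card_le_card_mul_card_of_forall_inter_sdiff (hyperplane a b)
    (F := {A | ((A ∩ hyperplane a b).dens : ℝ) ≤ 1 / 250 ∧ x ∉ A + A})
    (P := {B | (B.dens : ℝ) ≤ 1 / 250})
    (Q := {B ∈ (hyperplane a (b + 1)).powerset | x ∉ B + B}) (fun A hA ↦ by simp_all)
    (fun A hA ↦ mem_filter.2 ⟨mem_powerset.2 (hsdiff A), fun hxA ↦ (mem_filter.1 hA).2.2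
      (add_subset_add sdiff_subset sdiff_subset hxA)⟩)
  have hsparse := card_filter_dens_le_le_exp_two_pow (n := n) 8 (1 / 250)
  refine (Nat.cast_le.2 hsplit).trans ?_
  rw [Nat.cast_mul]
  refine (mul_le_mul hsparse (card_hyperplane_subsets_notMem_add_self_le ha (b + 1) hx)
    (Nat.cast_nonneg _) (Real.exp_pos _).le).trans ?_
  rw [← Real.exp_add, ← add_mul]
  refine exp_mul_two_pow_le_negl ?_
  push_cast
  linarith [Real.log_two_gt_d9]

end Exceptional

section UpperBound

/-- The subsets of `F₂ⁿ` that contain a linear hyperplane. -/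
def hyperplaneSupersets (n : ℕ) : Finset (Finset (V n)) := {S | ∃ a ≠ 0, hyperplane a 0 ⊆ S}

/-- The sets that stick out only negligibly from some junta, of `m` linear forms, of density
clearly below `1 / 2`. -/
noncomputable def nearSparseJuntas (m n : ℕ) : Finset (Finset (V n)) :=
  {A | ∃ Z ∈ linearJuntas m n, (Z.dens : ℝ) ≤ 4995 / 10000 ∧ ((A \ Z).dens : ℝ) ≤ 1 / 100000}

/-- The sets that almost miss one side of a hyperplane, although their sumset does not contain the
linear hyperplane. -/
noncomputable def lopsided (n : ℕ) : Finset (Finset (V n)) :=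
  {A | ∃ a ≠ 0, ∃ b, ∃ x ∈ hyperplane a 0,
    ((A ∩ hyperplane a b).dens : ℝ) ≤ 1 / 250 ∧ x ∉ A + A}

variable {n : ℕ}

lemma card_filter_ne_zero (n : ℕ) : #{a : V n | a ≠ 0} = 2 ^ n - 1 := by
  rw [filter_ne', card_erase_of_mem (mem_univ _)]
  simp

lemma card_hyperplaneSupersets_le (n : ℕ) :
    #(hyperplaneSupersets n) ≤ (2 ^ n - 1) * 2 ^ 2 ^ (n - 1) := by
  have hsub : hyperplaneSupersets n ⊆
      ({a | a ≠ 0} : Finset (V n)).biUnion fun a ↦ Icc (hyperplane a 0) univ := by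
    intro S hS
    simpa [hyperplaneSupersets] using hS
  rw [← card_filter_ne_zero]
  refine (card_le_card hsub).trans (card_biUnion_le_card_mul _ _ _ fun a ha ↦ ?_)
  have ha := (mem_filter.1 ha).2
  have hcard := two_mul_card_hyperplane ha 0
  rw [card_Icc_finset (subset_univ _), ← card_hyperplane ha 0]
  refine Nat.pow_le_pow_right two_pos ?_
  rw [card_univ, Fintype.card_pi_const, ZMod.card, ← hcard]
  lia

lemma card_nearSparseJuntas_le (m n : ℕ) :
    (#(nearSparseJuntas m n) : ℝ) ≤ (2 ^ n) ^ m * 2 ^ 2 ^ m * negl n := by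
  have hsub : nearSparseJuntas m n ⊆
      ({Z ∈ linearJuntas m n | (Z.dens : ℝ) ≤ 4995 / 10000} : Finset _).biUnion
        fun Z ↦ {A | ((A \ Z).dens : ℝ) ≤ 1 / 100000} := by
    intro A hA
    simpa [nearSparseJuntas, and_assoc] using hA
  calc (#(nearSparseJuntas m n) : ℝ)
      ≤ ∑ Z ∈ linearJuntas m n with (Z.dens : ℝ) ≤ 4995 / 10000,
          (#{A : Finset (V n) | ((A \ Z).dens : ℝ) ≤ 1 / 100000} : ℝ) :=
        mod_cast (card_le_card hsub).trans card_biUnion_le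
    _ ≤ #{Z ∈ linearJuntas m n | (Z.dens : ℝ) ≤ 4995 / 10000} * negl n := by
        rw [← nsmul_eq_mul]
        exact sum_le_card_nsmul _ _ _ fun Z hZ ↦ card_filter_dens_sdiff_le (mem_filter.1 hZ).2
    _ ≤ (2 ^ n) ^ m * 2 ^ 2 ^ m * negl n :=
        mul_le_mul_of_nonneg_right
          (mod_cast (card_filter_le _ _).trans (card_linearJuntas_le m n)) (Real.exp_pos _).le

lemma card_lopsided_le (n : ℕ) : (#(lopsided n) : ℝ) ≤ 2 * (2 ^ n) ^ 2 * negl n := by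
  have hsub : lopsided n ⊆
      ({p | p.1 ≠ 0 ∧ p.2.2 ∈ hyperplane p.1 0} : Finset (V n × ZMod 2 × V n)).biUnion
        fun p ↦ {A | ((A ∩ hyperplane p.1 p.2.1).dens : ℝ) ≤ 1 / 250 ∧ p.2.2 ∉ A + A} := by
    intro A hA
    simpa [lopsided, and_assoc] using hA
  calc (#(lopsided n) : ℝ)
      ≤ ∑ p : V n × ZMod 2 × V n with p.1 ≠ 0 ∧ p.2.2 ∈ hyperplane p.1 0,
          (#{A | ((A ∩ hyperplane p.1 p.2.1).dens : ℝ) ≤ 1 / 250 ∧ p.2.2 ∉ A + A} : ℝ) :=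
        mod_cast (card_le_card hsub).trans card_biUnion_le
    _ ≤ #({p | p.1 ≠ 0 ∧ p.2.2 ∈ hyperplane p.1 0} : Finset (V n × ZMod 2 × V n)) * negl n := by
        rw [← nsmul_eq_mul]
        refine sum_le_card_nsmul _ _ _ fun p hp ↦ ?_
        obtain ⟨ha, hx⟩ := (mem_filter.1 hp).2
        exact card_filter_dens_inter_hyperplane_le ha p.2.1 hx
    _ ≤ 2 * (2 ^ n) ^ 2 * negl n := by
        refine mul_le_mul_of_nonneg_right ?_ (Real.exp_pos _).le
        have hcard : Fintype.card (V n × ZMod 2 × V n) = 2 * (2 ^ n) ^ 2 := by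
          simp only [Fintype.card_prod, Fintype.card_pi_const, ZMod.card]
          ring
        exact_mod_cast (card_le_univ _).trans_eq hcard

theorem exists_forall_add_self_mem_hyperplaneSupersets_or : ∃ m : ℕ, ∀ (n : ℕ) (A : Finset (V n)),
    A + A ∈ hyperplaneSupersets n ∨ A ∈ nearSparseJuntas m n ∨
      (A + A)ᶜ ∈ nearSparseJuntas m n ∨ A ∈ lopsided n := by
  obtain ⟨m, hm⟩ := exists_linearJuntas_container (δ := 1 / 100000) (θ := 1 / 100000)
    (by norm_num) (by norm_num)
  refine ⟨m, fun n A ↦ ?_⟩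
  obtain ⟨A', hA', C', hC', hAA', hCC', hcorr⟩ := hm n A (A + A)ᶜ disjoint_compl_right
  simp only [hyperplaneSupersets, nearSparseJuntas, lopsided, mem_filter_univ]
  rcases le_total (A'.dens : ℝ) (4995 / 10000) with hA'sparse | hA'dense
  · exact .inr (.inl ⟨A', hA', hA'sparse, hAA'⟩)
  rcases le_total (C'.dens : ℝ) (4995 / 10000) with hC'sparse | hC'dense
  · exact .inr (.inr (.inl ⟨C', hC', hC'sparse, hCC'⟩))
  obtain ⟨a, ha, b, hdens'⟩ := exists_dens_inter_hyperplane_le hA'dense hC'dense hcorr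
  have hdens : ((A ∩ hyperplane a b).dens : ℝ) ≤ 1 / 250 := by
    have hsub : A ∩ hyperplane a b ⊆ A' ∩ hyperplane a b ∪ A \ A' := by
      intro x
      simp only [mem_inter, mem_union, mem_sdiff]
      tauto
    have hle : ((A ∩ hyperplane a b).dens : ℝ) ≤ (A' ∩ hyperplane a b).dens + (A \ A').dens :=
      mod_cast (dens_le_dens hsub).trans (dens_union_le _ _)
    linarith
  by_cases hsup : hyperplane a 0 ⊆ A + A
  · exact .inl ⟨a, ha, hsup⟩
  · obtain ⟨x, hx, hxA⟩ := not_subset.1 hsup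
    exact .inr (.inr (.inr ⟨a, ha, b, x, hx, hdens, hxA⟩))

theorem exists_card_sumsets_le : ∃ m : ℕ, ∀ n : ℕ,
    (#(sumsets n) : ℝ) ≤ (2 ^ n - 1) * 2 ^ 2 ^ (n - 1) +
      (2 * ((2 ^ n) ^ m * 2 ^ 2 ^ m) + 2 * (2 ^ n) ^ 2) * negl n := by
  obtain ⟨m, hm⟩ := exists_forall_add_self_mem_hyperplaneSupersets_or
  refine ⟨m, fun n ↦ ?_⟩
  have hsub : sumsets n ⊆ hyperplaneSupersets n ∪ ((nearSparseJuntas m n).image (fun A ↦ A + A) ∪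
      ((nearSparseJuntas m n).image compl ∪ (lopsided n).image fun A ↦ A + A)) := by
    intro S hS
    obtain ⟨A, -, rfl⟩ := mem_image.1 hS
    simp only [mem_union]
    refine (hm n A).imp_right (.imp (mem_image_of_mem _) (.imp (fun h ↦ ?_) (mem_image_of_mem _)))
    exact mem_image.2 ⟨_, h, compl_compl _⟩
  have hcard : #(sumsets n) ≤ #(hyperplaneSupersets n) +
      (#(nearSparseJuntas m n) + (#(nearSparseJuntas m n) + #(lopsided n))) :=
    (card_le_card hsub).trans <| (card_union_le _ _).trans <| Nat.add_le_add_left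
      ((card_union_le _ _).trans <| Nat.add_le_add card_image_le <|
        (card_union_le _ _).trans <| Nat.add_le_add card_image_le card_image_le) _
  have hcard' : (#(sumsets n) : ℝ) ≤ #(hyperplaneSupersets n) +
      (#(nearSparseJuntas m n) + (#(nearSparseJuntas m n) + #(lopsided n))) := mod_cast hcard
  have hmain : (#(hyperplaneSupersets n) : ℝ) ≤ (2 ^ n - 1) * 2 ^ 2 ^ (n - 1) := by
    have h := Nat.cast_le (α := ℝ).2 (card_hyperplaneSupersets_le n)
    simpa [Nat.cast_sub Nat.one_le_two_pow] using h
  linarith [card_nearSparseJuntas_le m n, card_lopsided_le n]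

end UpperBound

section LowerBound

variable {n : ℕ} {a : V n}

/-- The subsets `B` of the affine hyperplane `a ⬝ᵥ x = 1` such that both `B` and its complement
there have the whole linear hyperplane as sumset. -/
def richSubsets (a : V n) : Finset (Finset (V n)) :=
  {B ∈ (hyperplane a 1).powerset | hyperplane a 0 ⊆ B + B ∧
    hyperplane a 0 ⊆ (hyperplane a 1 \ B) + (hyperplane a 1 \ B)}

lemma mem_richSubsets {B : Finset (V n)} : B ∈ richSubsets a ↔ B ⊆ hyperplane a 1 ∧
    hyperplane a 0 ⊆ B + B ∧ hyperplane a 0 ⊆ (hyperplane a 1 \ B) + (hyperplane a 1 \ B) := by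
  rw [richSubsets, mem_filter, mem_powerset]

/-- The subsets of the affine hyperplane `a ⬝ᵥ x = 1` whose sumset misses a point of the linear
hyperplane. -/
def poorSubsets (a : V n) : Finset (Finset (V n)) :=
  {B ∈ (hyperplane a 1).powerset | ¬ hyperplane a 0 ⊆ B + B}

lemma card_poorSubsets_le (ha : a ≠ 0) : (#(poorSubsets a) : ℝ) ≤ 2 ^ n * negl n := by
  have hsub : poorSubsets a ⊆
      (hyperplane a 0).biUnion fun x ↦ {B ∈ (hyperplane a 1).powerset | x ∉ B + B} := by
    intro B hB
    obtain ⟨hB₁, hBB⟩ := mem_filter.1 hB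
    obtain ⟨x, hx, hxB⟩ := not_subset.1 hBB
    exact mem_biUnion.2 ⟨x, hx, mem_filter.2 ⟨hB₁, hxB⟩⟩
  calc (#(poorSubsets a) : ℝ)
      ≤ ∑ x ∈ hyperplane a 0, (#{B ∈ (hyperplane a 1).powerset | x ∉ B + B} : ℝ) :=
        mod_cast (card_le_card hsub).trans card_biUnion_le
    _ ≤ #(hyperplane a 0) * negl n := by
        rw [← nsmul_eq_mul]
        refine sum_le_card_nsmul _ _ _ fun x hx ↦
          (card_hyperplane_subsets_notMem_add_self_le ha 1 hx).trans (exp_mul_two_pow_le_negl ?_)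
        linarith [Real.log_two_gt_d9]
    _ ≤ 2 ^ n * negl n := by
        refine mul_le_mul_of_nonneg_right ?_ (Real.exp_pos _).le
        simpa using Nat.cast_le (α := ℝ).2 (card_le_univ (hyperplane a 0))

lemma two_pow_two_pow_le_card_richSubsets_add (ha : a ≠ 0) :
    (2 : ℝ) ^ 2 ^ (n - 1) ≤ #(richSubsets a) + 2 * (2 ^ n * negl n) := by
  have hsub : (hyperplane a 1).powerset ⊆
      richSubsets a ∪ (poorSubsets a ∪ (poorSubsets a).image fun B ↦ hyperplane a 1 \ B) := by
    intro B hB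
    have hcompl : hyperplane a 1 \ (hyperplane a 1 \ B) = B :=
      Finset.sdiff_sdiff_eq_self (mem_powerset.1 hB)
    by_contra hnot
    simp only [mem_union, richSubsets, poorSubsets, mem_filter, hB, true_and, mem_image, not_or,
      not_and, not_not, not_exists] at hnot
    obtain ⟨hrich, hBB, hpoor⟩ := hnot
    exact hrich hBB (by_contra fun h ↦ hpoor _ ⟨mem_powerset.2 sdiff_subset, h⟩ hcompl)
  have hcard : 2 ^ 2 ^ (n - 1) ≤ #(richSubsets a) + (#(poorSubsets a) + #(poorSubsets a)) := by
    rw [← card_hyperplane ha 1, ← card_powerset]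
    exact (card_le_card hsub).trans <| (card_union_le _ _).trans <| Nat.add_le_add_left
      ((card_union_le _ _).trans <| Nat.add_le_add_left card_image_le _) _
  have hcard' : (2 : ℝ) ^ 2 ^ (n - 1) ≤
      #(richSubsets a) + (#(poorSubsets a) + #(poorSubsets a)) := mod_cast hcard
  linarith [card_poorSubsets_le ha]

lemma hyperplane_zero_union_mem_sumsets {B : Finset (V n)} (hB : B ∈ richSubsets a) :
    hyperplane a 0 ∪ B ∈ sumsets n := by
  obtain ⟨hB₁, hBB, -⟩ := mem_richSubsets.1 hB
  refine mem_image.2 ⟨insert 0 B, mem_univ _, Subset.antisymm (fun x hx ↦ ?_) ?_⟩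
  · obtain ⟨y, hy, z, hz, rfl⟩ := mem_add.1 hx
    rw [mem_insert] at hy hz
    rw [mem_union, mem_hyperplane]
    rcases hy with rfl | hy <;> rcases hz with rfl | hz
    · simp
    · simp [hz]
    · simp [hy]
    · left
      rw [dotProduct_add, mem_hyperplane.1 (hB₁ hy), mem_hyperplane.1 (hB₁ hz),
        CharTwo.add_self_eq_zero]
  · refine union_subset (hBB.trans (add_subset_add (subset_insert _ _) (subset_insert _ _))) ?_
    intro x hx
    simpa using add_mem_add (mem_insert_self 0 B) (mem_insert_of_mem hx)

lemma eq_of_hyperplane_zero_subset_union {a' : V n} (ha : a ≠ 0) (ha' : a' ≠ 0) {B : Finset (V n)}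
    (hB : B ∈ richSubsets a) (h : hyperplane a' 0 ⊆ hyperplane a 0 ∪ B) : a = a' := by
  refine eq_of_hyperplane_zero_subset ha ha' fun x hx ↦ ?_
  obtain ⟨-, -, hcompl⟩ := mem_richSubsets.1 hB
  have hone {y : V n} (hy : y ∈ hyperplane a 1 \ B) : a' ⬝ᵥ y = 1 := by
    refine (eq_zero_or_eq_one _).resolve_left fun hy₀ ↦ ?_
    have hmem := h (mem_hyperplane.2 hy₀)
    simp_all
  obtain ⟨y, hy, z, hz, rfl⟩ := mem_add.1 (hcompl hx)
  rw [mem_hyperplane, dotProduct_add, hone hy, hone hz, CharTwo.add_self_eq_zero]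

lemma disjoint_hyperplane_zero {B : Finset (V n)} (hB : B ∈ richSubsets a) :
    Disjoint (hyperplane a 0) B :=
  disjoint_left.2 fun x hx hxB ↦ by
    have hx₁ := (mem_richSubsets.1 hB).1 hxB
    simp_all

lemma sum_card_richSubsets_le (n : ℕ) : ∑ a : V n with a ≠ 0, #(richSubsets a) ≤ #(sumsets n) := by
  rw [← card_sigma]
  refine card_le_card_of_injOn (fun p ↦ hyperplane p.1 0 ∪ p.2)
    (fun p hp ↦ hyperplane_zero_union_mem_sumsets (mem_sigma.1 hp).2) ?_
  rintro ⟨a, B⟩ hB ⟨a', B'⟩ hB' heq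
  simp only [mem_coe, mem_sigma, mem_filter_univ] at hB hB' heq
  obtain rfl : a = a' := eq_of_hyperplane_zero_subset_union hB.1 hB'.1 hB.2
    (heq ▸ subset_union_left)
  rw [← union_sdiff_cancel_left (disjoint_hyperplane_zero hB.2), heq,
    union_sdiff_cancel_left (disjoint_hyperplane_zero hB'.2)]

theorem le_card_sumsets_add (n : ℕ) :
    (2 ^ n - 1) * (2 : ℝ) ^ 2 ^ (n - 1) ≤ #(sumsets n) + 2 * (2 ^ n) ^ 2 * negl n := by
  have hcard : ((#{a : V n | a ≠ 0} : ℕ) : ℝ) = 2 ^ n - 1 := by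
    rw [card_filter_ne_zero, Nat.cast_sub Nat.one_le_two_pow]
    simp
  have hnegl : 0 ≤ negl n := (Real.exp_pos _).le
  calc (2 ^ n - 1) * (2 : ℝ) ^ 2 ^ (n - 1)
      ≤ ∑ a : V n with a ≠ 0, ((#(richSubsets a) : ℝ) + 2 * (2 ^ n * negl n)) := by
        rw [← hcard, ← nsmul_eq_mul]
        exact card_nsmul_le_sum _ _ _ fun a ha ↦
          two_pow_two_pow_le_card_richSubsets_add (mem_filter.1 ha).2
    _ = ((∑ a : V n with a ≠ 0, #(richSubsets a) : ℕ) : ℝ) +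
          (2 ^ n - 1) * (2 * (2 ^ n * negl n)) := by
        rw [sum_add_distrib, sum_const, nsmul_eq_mul, hcard, Nat.cast_sum]
    _ ≤ #(sumsets n) + 2 * (2 ^ n) ^ 2 * negl n := by
        have hsum := Nat.cast_le (α := ℝ).2 (sum_card_richSubsets_le n)
        nlinarith [mul_nonneg (pow_nonneg (zero_le_two (α := ℝ)) n) hnegl]

end LowerBound

section Asymptotics

open Filter Asymptotics

lemma negl_eq {n : ℕ} (hn : 1 ≤ n) :
    negl n = Real.exp (-(1 / 10000) * 2 ^ n) * 2 ^ 2 ^ (n - 1) := by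
  have hhalf : (2 : ℝ) ^ n = 2 * ((2 ^ (n - 1) : ℕ) : ℝ) := by
    rw [Nat.cast_pow, Nat.cast_two, ← pow_succ', Nat.sub_add_cancel hn]
  rw [← Real.rpow_natCast 2 (2 ^ (n - 1)), Real.rpow_def_of_pos two_pos, ← Real.exp_add, negl,
    hhalf]
  ring_nf

theorem isLittleO_pow_mul_negl (k : ℕ) :
    (fun n ↦ (2 ^ n) ^ k * negl n) =o[atTop] fun n ↦ (2 : ℝ) ^ 2 ^ (n - 1) := by
  have hdecay : Tendsto (fun n : ℕ ↦ ((2 : ℝ) ^ n) ^ k * Real.exp (-(1 / 10000) * 2 ^ n)) atTop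
      (nhds 0) := by
    have h := (tendsto_rpow_mul_exp_neg_mul_atTop_nhds_zero k (1 / 10000) (by norm_num)).comp
      (tendsto_pow_atTop_atTop_of_one_lt one_lt_two)
    simpa [Function.comp_def] using h
  refine ((isLittleO_one_iff ℝ).2 hdecay).mul_isBigO (isBigO_refl (fun n ↦ (2 : ℝ) ^ 2 ^ (n - 1)) _)
    |>.congr' ?_ ?_
  · filter_upwards [eventually_ge_atTop 1] with n hn
    rw [negl_eq hn, mul_assoc]
  · simp

theorem exists_abs_card_sumsets_sub_le : ∃ (K : ℝ) (k : ℕ), ∀ n : ℕ,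
    |(#(sumsets n) : ℝ) - (2 ^ n - 1) * 2 ^ 2 ^ (n - 1)| ≤ K * ((2 ^ n) ^ k * negl n) := by
  obtain ⟨m, hm⟩ := exists_card_sumsets_le
  refine ⟨2 * 2 ^ 2 ^ m + 2, m + 2, fun n ↦ ?_⟩
  have hnegl : 0 ≤ negl n := (Real.exp_pos _).le
  have hone : (1 : ℝ) ≤ 2 ^ n := one_le_pow₀ one_le_two
  have hm' : ((2 : ℝ) ^ n) ^ m * 2 ^ 2 ^ m * negl n ≤ 2 ^ 2 ^ m * ((2 ^ n) ^ (m + 2) * negl n) := by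
    rw [mul_comm ((2 ^ n) ^ m : ℝ), mul_assoc]
    gcongr
    lia
  have htwo : ((2 : ℝ) ^ n) ^ 2 * negl n ≤ (2 ^ n) ^ (m + 2) * negl n := by
    gcongr
    lia
  have hpos : 0 ≤ (2 : ℝ) ^ 2 ^ m * ((2 ^ n) ^ (m + 2) * negl n) := by positivity
  rw [abs_le]
  constructor <;> linarith [hm n, le_card_sumsets_add n]

end Asymptotics

end SumsetCount

/-- `|𝒮ₙ| ~ (2ⁿ − 1)·2^(2^(n−1))`. -/
theorem sumset_count_asymptotic :
    ∀ ε : ℝ, 0 < ε → ∃ n₀ : ℕ, ∀ n : ℕ, n₀ ≤ n →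
      (1 - ε) * (((2 : ℝ) ^ n - 1) * 2 ^ 2 ^ (n - 1)) ≤ ((sumsets n).card : ℝ) ∧
      ((sumsets n).card : ℝ) ≤ (1 + ε) * (((2 : ℝ) ^ n - 1) * 2 ^ 2 ^ (n - 1)) := by
  intro ε hε
  obtain ⟨K, k, hK⟩ := SumsetCount.exists_abs_card_sumsets_sub_le
  have hsmall := ((SumsetCount.isLittleO_pow_mul_negl k).const_mul_left K).bound hε
  obtain ⟨n₀, hn₀⟩ := Filter.eventually_atTop.1 hsmall
  refine ⟨max n₀ 1, fun n hn ↦ ?_⟩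
  obtain ⟨hnn₀, hn1⟩ := max_le_iff.1 hn
  have hmain : (1 : ℝ) ≤ 2 ^ n - 1 := by
    linarith [pow_le_pow_right₀ (one_le_two (α := ℝ)) hn1]
  have herr : |((sumsets n).card : ℝ) - (2 ^ n - 1) * 2 ^ 2 ^ (n - 1)| ≤
      ε * ((2 ^ n - 1) * 2 ^ 2 ^ (n - 1)) :=
    calc _ ≤ K * ((2 ^ n) ^ k * SumsetCount.negl n) := hK n
      _ ≤ ε * 2 ^ 2 ^ (n - 1) := by simpa using (le_abs_self _).trans (hn₀ n hnn₀)
      _ ≤ ε * ((2 ^ n - 1) * 2 ^ 2 ^ (n - 1)) :=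
        mul_le_mul_of_nonneg_left (le_mul_of_one_le_left (by positivity) hmain) hε.le
  rw [abs_le] at herr
  constructor <;> linarith
end

section
/- For every ε > 0 there exists n₀ such that for all n ≥ n₀, the symmetric difference of 𝒮ₙ and ℋₙ satisfies |𝒮ₙ Δ ℋₙ| ≤ ε·|𝒮ₙ|. (That is, |𝒮ₙ Δ ℋₙ| = o(|𝒮ₙ|).) -/
open Pointwise

/-- `v^⊥ = {x : ⟨x, v⟩ = 0}`. -/
def perp {n : ℕ} (v : V n) : Finset (V n) :=
  Finset.univ.filter (fun x => ∑ i, x i * v i = 0)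

/-- `ℋₙ`: subsets of `F₂ⁿ` containing a complete linear subspace of co-dimension 1. -/
def Hfam (n : ℕ) : Finset (Finset (V n)) :=
  Finset.univ.filter (fun S => ∃ v : V n, v ≠ 0 ∧ perp v ⊆ S)

/-!
Subsets of `F₂ⁿ` that contain a hyperplane are almost always sumsets, and sumsets almost always
contain a hyperplane. Put `N = 2 ^ n`. As `ℋₙ` has at least `2 ^ (N / 2)` members, it suffices to
have exceptional families of size at most `2 ^ ((1 / 2 - c) * N)` for some `c > 0`. The saving comes
from one count: if `t ∉ A + A` then `A` contains at most one point of each pair `{a, a + t}`, so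
if a positive proportion of `D` is covered by disjoint pairs `{a, a + t} ⊆ D`, then only
exponentially few of the `2 ^ |D|` subsets `A` of `D` have `t ∉ A + A`.

* Suppose `S` contains a hyperplane `K` and let `B = S \ K`. If `K ⊆ B + B` then `S = A + A` for
  `A = B ∪ {0}`. Otherwise `B` is a subset of the other coset of `K`, of size `N / 2`, whose sumset
  omits some `t ∈ K`, and the count applies.

* Suppose `S = A + A` contains no hyperplane. There are few choices of `S` with small complement.
  Otherwise fix a large bounded number of elements outside `S`, forming a set `T`. No two elements
  of `A` differ by an element of `T`, so `A` is an independent set of the Cayley graph of `T`, and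
  the container method puts it inside one of few sets `D`, each of size little more than `N / 2`.
  If some `t ∉ S` has many pairs `{a, a + t} ⊆ D`, the count applies. Otherwise `Sᶜ` consists of
  antiperiods of `D`, elements `t` for which `D` and `t + D` are nearly disjoint. The difference of
  two antiperiods is nearly a period when `D` is large, and so is a sum of two such differences. So
  when the set `P` of antiperiods has more than `3 * N / 8` elements, the small doubling theorem
  provides a subgroup of index at most two in `P + P - (P + P)`, which is disjoint from `P` and
  therefore contained in `S`, a contradiction. When `P` is smaller, there are at most
  `2 ^ (3 * N / 8)` choices of `Sᶜ ⊆ P`. When `D` is not large, it has too few subsets to matter.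

All sizes are measured in units of `Q = N / 2 ^ 14`: fingerprints of containers have at most `Q`
elements, containers at most `8224 * Q` (where `N / 2` is `8192 * Q`), and `t` is an antiperiod when
less than `1024 * Q` points of `D` lie in `t + D`. The count then saves a factor `2 ^ (128 * Q)`,
while the choices of `T` and of the fingerprint cost a factor `2 ^ (64 * Q)`.
-/

section Counting

open Finset

lemma card_symmDiff_le_mul_card {α : Type*} [DecidableEq α] {S H : Finset α} {K ε : ℝ}
    (hε : 0 ≤ ε) (hK : 1 + ε ≤ ε * K) (h_small : K * #((S \ H) ∪ (H \ S)) ≤ #H) :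
    (#((S \ H) ∪ (H \ S)) : ℝ) ≤ ε * #S := by
  have h_subset : (#H : ℝ) ≤ #S + #((S \ H) ∪ (H \ S)) := by
    have h : H ⊆ S ∪ ((S \ H) ∪ (H \ S)) := fun x hx ↦ by
      by_cases hxS : x ∈ S <;> simp [hx, hxS]
    exact_mod_cast (card_le_card h).trans (card_union_le _ _)
  set d : ℝ := (#((S \ H) ∪ (H \ S)) : ℝ)
  calc d = (1 + ε) * d - ε * d := by ring
    _ ≤ ε * K * d - ε * d := by gcongr
    _ = ε * (K * d - d) := by ring
    _ ≤ ε * #S := by gcongr; linarith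

lemma card_filter_card_le_mul_pow_le {α : Type*} [Fintype α] (q : ℕ) {x : ℕ} (hx : 0 < x) :
    #{F : Finset α | #F ≤ q} * x ^ (Fintype.card α - q) ≤ (x + 1) ^ Fintype.card α :=
  calc #{F : Finset α | #F ≤ q} * x ^ (Fintype.card α - q)
      = ∑ F : Finset α with #F ≤ q, x ^ (Fintype.card α - q) := by rw [sum_const, smul_eq_mul]
    _ ≤ ∑ F : Finset α with #F ≤ q, x ^ (Fintype.card α - #F) := by
      gcongr with F hF
      exact (mem_filter.1 hF).2
    _ ≤ ∑ F : Finset α, x ^ (Fintype.card α - #F) :=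
      sum_le_sum_of_subset (filter_subset _ _)
    _ = (x + 1) ^ Fintype.card α := by
      simpa [add_comm] using sum_pow_mul_eq_add_pow 1 x (univ : Finset α)

lemma card_filter_card_le_le_two_pow {α : Type*} [Fintype α] {Q : ℕ}
    (hα : Fintype.card α = 2 ^ 14 * Q) :
    #{F : Finset α | #F ≤ Q} ≤ 2 ^ (32 * Q) := by
  have h_base : (2 ^ 11 + 1) ^ 2 ^ 10 ≤ 2 * (2 ^ 11) ^ 2 ^ 10 := by
    set_option exponentiation.threshold 1024 in norm_num
  refine Nat.le_of_mul_le_mul_right (c := (2 ^ 11) ^ (2 ^ 14 * Q - Q)) ?_ (by positivity)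
  calc #{F : Finset α | #F ≤ Q} * (2 ^ 11) ^ (2 ^ 14 * Q - Q)
      ≤ (2 ^ 11 + 1) ^ (2 ^ 14 * Q) := by
        rw [← hα]
        exact card_filter_card_le_mul_pow_le Q (by norm_num)
    _ = ((2 ^ 11 + 1) ^ 2 ^ 10) ^ (2 ^ 4 * Q) := by
      rw [← pow_mul, ← mul_assoc, ← pow_add]
    _ ≤ (2 * (2 ^ 11) ^ 2 ^ 10) ^ (2 ^ 4 * Q) := Nat.pow_le_pow_left h_base _
    _ = 2 ^ (27 * Q) * (2 ^ 11) ^ (2 ^ 14 * Q - Q) := by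
      simp only [mul_pow, ← pow_mul, ← pow_add]
      congr 1
      omega
    _ ≤ 2 ^ (32 * Q) * (2 ^ 11) ^ (2 ^ 14 * Q - Q) :=
      Nat.mul_le_mul_right _ (Nat.pow_le_pow_right two_pos (by omega))

end Counting

section AddCommGroup

open Finset

variable {G : Type*} [AddCommGroup G]

/-- `S` contains a subgroup of index one or two; in `F₂ⁿ` with `n ≠ 0` this means that `S` contains
a hyperplane. The group is meant to be finite, as the `index` of a subgroup is `0` when infinite. -/
def ContainsLargeSubgroup (S : Finset G) : Prop :=
  ∃ H : AddSubgroup G, H.index ≤ 2 ∧ (H : Set G) ⊆ S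

lemma card_filter_notMem_of_index_two [Fintype G] {K : AddSubgroup G} [DecidablePred (· ∈ K)]
    (hK : K.index = 2) : 2 * #{x : G | x ∉ K} = Fintype.card G := by
  have h_index := K.index_mul_card
  rw [hK, Nat.card_eq_fintype_card, Fintype.card_subtype, Nat.card_eq_fintype_card] at h_index
  have h_split := card_filter_add_card_filter_not (s := (univ : Finset G)) (· ∈ K)
  rw [card_univ] at h_split
  omega

variable [DecidableEq G]

lemma mem_vadd_finset_iff_sub_mem {D : Finset G} {t x : G} : x ∈ t +ᵥ D ↔ x - t ∈ D := by
  rw [← neg_vadd_mem_iff, vadd_eq_add, neg_add_eq_sub]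

lemma card_inter_vadd_add_card_vadd_sdiff (D : Finset G) (t : G) :
    #(D ∩ (t +ᵥ D)) + #((t +ᵥ D) \ D) = #D := by
  rw [inter_comm, card_inter_add_card_sdiff, card_vadd_finset]

lemma card_vadd_inter_vadd_self (D : Finset G) (s t : G) :
    #((s +ᵥ D) ∩ (t +ᵥ D)) = #(D ∩ ((s - t) +ᵥ D)) := by
  rw [← card_vadd_finset t (D ∩ _), vadd_finset_inter, vadd_vadd, add_sub_cancel, inter_comm]

lemma card_add_vadd_sdiff_le (D : Finset G) (s t : G) :
    #(((s + t) +ᵥ D) \ D) ≤ #((s +ᵥ D) \ D) + #((t +ᵥ D) \ D) :=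
  calc #(((s + t) +ᵥ D) \ D)
      ≤ #(((s + t) +ᵥ D) \ (s +ᵥ D) ∪ (s +ᵥ D) \ D) := card_le_card (sdiff_triangle _ _ _)
    _ ≤ #(((s + t) +ᵥ D) \ (s +ᵥ D)) + #((s +ᵥ D) \ D) := card_union_le _ _
    _ = #((s +ᵥ D) \ D) + #((t +ᵥ D) \ D) := by
      rw [add_vadd, ← vadd_finset_sdiff, card_vadd_finset, add_comm]

/-- The `t`-free subsets of `D`: those without two elements differing by `t`. -/
def differenceFree (D : Finset G) (t : G) : Finset (Finset G) := {A ∈ D.powerset | t ∉ A - A}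

lemma mem_differenceFree {D A : Finset G} {t : G} :
    A ∈ differenceFree D t ↔ A ⊆ D ∧ t ∉ A - A := by
  simp [differenceFree]

lemma card_differenceFree_le (D : Finset G) (t : G) : #(differenceFree D t) ≤ 2 ^ #D := by
  rw [← card_powerset]
  exact card_filter_le _ _

lemma card_differenceFree_zero_le_one (D : Finset G) : #(differenceFree D 0) ≤ 1 := by
  refine card_le_one_iff_subset_singleton.2 ⟨∅, fun A hA ↦ ?_⟩
  simpa using (mem_differenceFree.1 hA).2

lemma card_differenceFree_le_three_mul (D : Finset G) (a t : G) :
    #(differenceFree D t) ≤ 3 * #(differenceFree (D \ {a, a + t}) t) := by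
  have h_maps : ∀ A ∈ differenceFree D t, (A ∩ {a, a + t}, A \ {a, a + t}) ∈
      ({∅, {a}, {a + t}} : Finset (Finset G)) ×ˢ differenceFree (D \ {a, a + t}) t := by
    intro A hA
    obtain ⟨hAD, htA⟩ := mem_differenceFree.1 hA
    refine mem_product.2 ⟨?_, mem_differenceFree.2 ⟨sdiff_subset_sdiff hAD subset_rfl,
      fun h ↦ htA (sub_subset_sub sdiff_subset sdiff_subset h)⟩⟩
    have h_not_both : ¬(a ∈ A ∧ a + t ∈ A) := fun h ↦
      htA (by simpa using sub_mem_sub h.2 h.1)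
    by_cases ha : a ∈ A <;> by_cases hb : a + t ∈ A <;>
      simp_all [inter_insert_of_mem, inter_insert_of_notMem, inter_singleton_of_mem,
        inter_singleton_of_notMem]
  calc #(differenceFree D t)
      ≤ #(({∅, {a}, {a + t}} : Finset (Finset G)) ×ˢ differenceFree (D \ {a, a + t}) t) :=
        card_le_card_of_injOn _ h_maps fun A _ B _ h ↦ by
          rw [← sdiff_union_inter A {a, a + t}, ← sdiff_union_inter B {a, a + t}]
          simp only [Prod.mk.injEq] at h
          rw [h.1, h.2]
    _ ≤ 3 * #(differenceFree (D \ {a, a + t}) t) := by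
      rw [card_product]
      exact Nat.mul_le_mul_right _ card_le_three

-- The pairs `{a, a + t} ⊆ D` are disjoint because `2t = 0`; a `t`-free set meets each of them in
-- at most one point, which leaves three of the four subsets of each pair.
lemma four_pow_mul_card_differenceFree_le {D : Finset G} {t : G} {j : ℕ} (ht : t + t = 0)
    (hj : 2 * j ≤ #(D ∩ (t +ᵥ D))) :
    4 ^ j * #(differenceFree D t) ≤ 3 ^ j * 2 ^ #D := by
  obtain rfl | ht₀ := eq_or_ne t 0
  · have hjD : 2 * j ≤ #D := by simpa using hj
    calc 4 ^ j * #(differenceFree D 0) ≤ 4 ^ j * 1 := by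
          gcongr; exact card_differenceFree_zero_le_one D
      _ = 1 * 2 ^ (2 * j) := by rw [pow_mul]; norm_num
      _ ≤ 3 ^ j * 2 ^ #D := by gcongr <;> simp [Nat.one_le_pow]
  induction j generalizing D with
  | zero => simpa using card_differenceFree_le D t
  | succ j ih =>
    obtain ⟨a, ha⟩ : (D ∩ (t +ᵥ D)).Nonempty := card_pos.1 (by omega)
    have h_sub : a - t = a + t := by rw [sub_eq_add_neg, neg_eq_of_add_eq_zero_left ht]
    obtain ⟨haD, hbD⟩ : a ∈ D ∧ a + t ∈ D := by
      rwa [mem_inter, mem_vadd_finset_iff_sub_mem, h_sub] at ha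
    have h_pair : #{a, a + t} = 2 := card_pair (by simpa using ht₀)
    set D' := D \ {a, a + t} with hD'
    have h_card : #D' + 2 = #D := by
      rw [← h_pair, hD']
      exact card_sdiff_add_card_eq_card (by simp [insert_subset_iff, haD, hbD])
    have h_pair_vadd : t +ᵥ ({a, a + t} : Finset G) = {a, a + t} := by
      rw [vadd_finset_insert, vadd_finset_singleton, vadd_eq_add, vadd_eq_add, add_left_comm, ht,
        add_zero, add_comm t, pair_comm]
    have h_overlap : 2 * j ≤ #(D' ∩ (t +ᵥ D')) := by
      have h_eq : D' ∩ (t +ᵥ D') = (D ∩ (t +ᵥ D)) \ {a, a + t} := by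
        rw [hD', vadd_finset_sdiff, h_pair_vadd, ← inf_eq_inter, ← inf_eq_inter, inf_sdiff]
      have := le_card_sdiff {a, a + t} (D ∩ (t +ᵥ D))
      rw [h_eq]
      omega
    calc 4 ^ (j + 1) * #(differenceFree D t)
        ≤ 4 ^ (j + 1) * (3 * #(differenceFree D' t)) := by
          gcongr; exact card_differenceFree_le_three_mul D a t
      _ = 12 * (4 ^ j * #(differenceFree D' t)) := by ring
      _ ≤ 12 * (3 ^ j * 2 ^ #D') := Nat.mul_le_mul_left 12 (ih h_overlap)
      _ = 3 ^ (j + 1) * 2 ^ #D := by rw [← h_card]; ring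

lemma card_differenceFree_le_two_pow {D : Finset G} {t : G} {Q : ℕ} (ht : t + t = 0)
    (hD : #D ≤ 8224 * Q) (h_overlap : 1024 * Q ≤ #(D ∩ (t +ᵥ D))) :
    #(differenceFree D t) ≤ 2 ^ (8096 * Q) := by
  have h_free := four_pow_mul_card_differenceFree_le (D := D) (j := 512 * Q) ht (by omega)
  refine Nat.le_of_mul_le_mul_left (c := 4 ^ (512 * Q)) ?_ (by positivity)
  calc 4 ^ (512 * Q) * #(differenceFree D t)
      ≤ 3 ^ (512 * Q) * 2 ^ (8224 * Q) := h_free.trans (by gcongr; exact one_le_two)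
    _ = (3 ^ 4) ^ (128 * Q) * 2 ^ (8224 * Q) := by rw [← pow_mul]; ring_nf
    _ ≤ (2 ^ 7) ^ (128 * Q) * 2 ^ (8224 * Q) :=
      Nat.mul_le_mul_right _ (Nat.pow_le_pow_left (by norm_num) _)
    _ = (2 ^ 2) ^ (512 * Q) * 2 ^ (8096 * Q) := by
      rw [← pow_mul, ← pow_mul, ← pow_add, ← pow_add]
      ring_nf
    _ = 4 ^ (512 * Q) * 2 ^ (8096 * Q) := by norm_num

lemma exists_addSubgroup_coe_eq_sub_self {X : Finset G} (hX : #(X + X) < (3 / 2 : ℚ) * #X) :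
    ∃ H : AddSubgroup G, (H : Set G) = ↑(X - X) := by
  refine ⟨(invMulSubgroup (G := Multiplicative G) X hX).toAddSubgroup', ?_⟩
  rw [sub_eq_neg_add, coe_add]
  exact invMulSubgroup_eq_inv_mul (G := Multiplicative G) X hX

lemma insert_zero_add_insert_zero_eq {K : AddSubgroup G} [DecidablePred (· ∈ K)] (hK : K.index = 2)
    {S : Finset G} (hKS : (K : Set G) ⊆ S)
    (h_cover : ∀ x ∈ K, x ∈ ({y ∈ S | y ∉ K} : Finset G) + {y ∈ S | y ∉ K}) :
    insert 0 {y ∈ S | y ∉ K} + insert 0 {y ∈ S | y ∉ K} = S := by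
  refine Subset.antisymm (add_subset_iff.2 fun a ha b hb ↦ ?_) fun x hx ↦ ?_
  · rw [mem_insert, mem_filter] at ha hb
    obtain rfl | ⟨haS, haK⟩ := ha
    · obtain rfl | ⟨hbS, -⟩ := hb
      · simpa using hKS K.zero_mem
      · rwa [zero_add]
    · obtain rfl | ⟨-, hbK⟩ := hb
      · rwa [add_zero]
      · exact hKS ((AddSubgroup.add_mem_iff_of_index_two hK).2 (iff_of_false haK hbK))
  · by_cases hxK : x ∈ K
    · exact add_subset_add (subset_insert _ _) (subset_insert _ _) (h_cover x hxK)
    · rw [← add_zero x]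
      exact add_mem_add (mem_insert_of_mem (mem_filter.2 ⟨hx, hxK⟩)) (mem_insert_self _ _)

/-- The sumsets `A + A` with `A ⊆ D`: all of `𝒮ₙ` when `D` is the whole of `F₂ⁿ`, and the candidates
that a container `D` leaves otherwise. -/
def sumsetsWithin (D : Finset G) : Finset (Finset G) := D.powerset.image fun A ↦ A + A

lemma mem_sumsetsWithin {D S : Finset G} : S ∈ sumsetsWithin D ↔ ∃ A ⊆ D, A + A = S := by
  simp [sumsetsWithin]

lemma card_sumsetsWithin_le (D : Finset G) : #(sumsetsWithin D) ≤ 2 ^ #D := by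
  rw [← card_powerset]
  exact card_image_le

variable [Fintype G]

/-- The container with fingerprint `F`, for sets whose difference set avoids `T`: the vertices
outside the out-neighbourhood `F + T` of `F` in the Cayley digraph of `T` that have at most `φ`
out-neighbours outside `F + T`. -/
def container (T : Finset G) (φ : ℕ) (F : Finset G) : Finset G :=
  {v | v ∉ F + T ∧ #((v +ᵥ T) \ (F + T)) ≤ φ}

lemma mem_container {T F : Finset G} {φ : ℕ} {v : G} :
    v ∈ container T φ F ↔ v ∉ F + T ∧ #((v +ᵥ T) \ (F + T)) ≤ φ := by
  simp [container]

-- A fingerprint is a subset `F` of `A` that maximises `#(F + T) - φ * #F`.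
lemma exists_subset_container {T A : Finset G} (φ : ℕ) (hA : Disjoint (A - A) T) :
    ∃ F : Finset G, φ * #F ≤ Fintype.card G ∧ A ⊆ container T φ F := by
  obtain ⟨F, hFA, h_max⟩ := exists_max_image A.powerset
    (fun F ↦ (#(F + T) - φ * #F : ℤ)) ⟨∅, empty_mem_powerset A⟩
  rw [mem_powerset] at hFA
  refine ⟨F, ?_, fun v hv ↦ mem_container.2 ⟨fun hvF ↦ ?_, ?_⟩⟩
  · have h_empty := h_max ∅ (empty_mem_powerset A)
    have h_univ := card_le_univ (F + T)
    simp only [empty_add, card_empty, Nat.cast_zero, mul_zero, sub_zero] at h_empty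
    zify at h_univ ⊢
    linarith
  · obtain ⟨f, hf, t, ht, rfl⟩ := mem_add.1 hvF
    exact disjoint_left.1 hA (by simpa using sub_mem_sub hv (hFA hf)) ht
  · have h_insert := h_max (insert v F) (mem_powerset.2 (insert_subset hv hFA))
    have h_union : (v +ᵥ T) ∪ (F + T) ⊆ insert v F + T :=
      union_subset (vadd_finset_subset_add (mem_insert_self v F))
        (add_subset_add_right (subset_insert v F))
    have h_card := (card_sdiff_add_card (v +ᵥ T) (F + T)).trans_le (card_le_card h_union)
    have h_card_insert := Nat.mul_le_mul_left φ (card_insert_le v F)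
    zify at h_card h_card_insert ⊢
    linarith

lemma two_mul_card_mul_card_container_le (T F : Finset G) (φ : ℕ) :
    2 * #T * #(container T φ F) ≤ #T * Fintype.card G + φ * #(container T φ F) := by
  have h_disj : #(container T φ F) + #(F + T) ≤ Fintype.card G := by
    rw [← card_union_of_disjoint (disjoint_left.2 fun v hv ↦ (mem_container.1 hv).1)]
    exact card_le_univ _
  have h_count : #(container T φ F) * (#T - φ) ≤ #(F + T) * #T := by
    refine card_mul_le_card_mul (fun v w ↦ w ∈ v +ᵥ T) (fun v hv ↦ ?_) fun w _ ↦ ?_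
    · have h_sdiff := (mem_container.1 hv).2
      have h_split := card_sdiff_add_card_inter (v +ᵥ T) (F + T)
      rw [card_vadd_finset] at h_split
      rw [bipartiteAbove, filter_mem_eq_inter, inter_comm]
      omega
    · refine card_le_card_of_injOn (w - ·) (fun v hv ↦ ?_) sub_right_injective.injOn
      exact mem_vadd_finset_iff_sub_mem.1 ((mem_bipartiteBelow _).1 hv).2
  have h_tsub : #T ≤ #T - φ + φ := le_tsub_add
  nlinarith

/-- The group elements `t` for which few points, less than `m`, of `D` lie in `t + D`. -/
def antiperiods (D : Finset G) (m : ℕ) : Finset G := {t | #(D ∩ (t +ᵥ D)) < m}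

lemma mem_antiperiods {D : Finset G} {m : ℕ} {t : G} :
    t ∈ antiperiods D m ↔ #(D ∩ (t +ᵥ D)) < m := by
  simp [antiperiods]

-- `s + D` and `t + D` nearly lie in the complement of `D`, so they overlap a lot if `D` is large.
lemma card_sub_vadd_sdiff_le {D : Finset G} {m : ℕ} {s t : G} (hs : s ∈ antiperiods D m)
    (ht : t ∈ antiperiods D m) :
    2 * #D + #(((s - t) +ᵥ D) \ D) ≤ Fintype.card G + 2 * m := by
  rw [mem_antiperiods] at hs ht
  have h_union : #((s +ᵥ D) \ D ∪ (t +ᵥ D) \ D) ≤ #Dᶜ :=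
    card_le_card (union_subset (fun x hx ↦ mem_compl.2 (mem_sdiff.1 hx).2)
      fun x hx ↦ mem_compl.2 (mem_sdiff.1 hx).2)
  have h_inter : #((s +ᵥ D) \ D ∩ ((t +ᵥ D) \ D)) ≤ #(D ∩ ((s - t) +ᵥ D)) := by
    rw [← card_vadd_inter_vadd_self]
    exact card_le_card (inter_subset_inter sdiff_subset sdiff_subset)
  have := card_union_add_card_inter ((s +ᵥ D) \ D) ((t +ᵥ D) \ D)
  have := card_compl_add_card D
  have := card_inter_vadd_add_card_vadd_sdiff D s
  have := card_inter_vadd_add_card_vadd_sdiff D t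
  have := card_inter_vadd_add_card_vadd_sdiff D (s - t)
  omega

lemma disjoint_antiperiods_add_sub_add {D : Finset G} {m : ℕ}
    (hD : 2 * Fintype.card G + 5 * m ≤ 5 * #D) :
    Disjoint (antiperiods D m)
      (antiperiods D m + antiperiods D m - (antiperiods D m + antiperiods D m)) := by
  refine disjoint_right.2 fun x hx hxP ↦ ?_
  obtain ⟨_, hy, _, hz, rfl⟩ := mem_sub.1 hx
  obtain ⟨s, hs, t, ht, rfl⟩ := mem_add.1 hy
  obtain ⟨s', hs', t', ht', rfl⟩ := mem_add.1 hz
  have h_triangle := card_add_vadd_sdiff_le D (s - s') (t - t')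
  rw [mem_antiperiods, add_sub_add_comm] at hxP
  have := card_sub_vadd_sdiff_le hs hs'
  have := card_sub_vadd_sdiff_le ht ht'
  have := card_inter_vadd_add_card_vadd_sdiff D (s - s' + (t - t'))
  omega

lemma sub_self_eq_univ_of_card_lt {Y : Finset G} (hY : Fintype.card G < 2 * #Y) :
    Y - Y = univ := by
  refine eq_univ_of_forall fun x ↦ ?_
  obtain ⟨y, hy⟩ := inter_nonempty_of_card_lt_card_add_card (subset_univ Y)
    (subset_univ (x +ᵥ Y)) (by rw [card_vadd_finset, card_univ]; omega)
  rw [mem_inter, mem_vadd_finset_iff_sub_mem] at hy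
  simpa using sub_mem_sub hy.1 hy.2

lemma exists_index_le_two_subset {X : Finset G} (hX : 3 * Fintype.card G < 8 * #X) :
    ∃ H : AddSubgroup G, H.index ≤ 2 ∧ (H : Set G) ⊆ ↑(X + X - (X + X)) := by
  by_cases h_large : Fintype.card G < 2 * #(X + X)
  · exact ⟨⊤, by simp, by simp [sub_self_eq_univ_of_card_lt h_large]⟩
  have h_doubling : #(X + X) < (3 / 2 : ℚ) * #X := by
    rw [not_lt] at h_large
    qify at hX h_large
    linarith
  obtain ⟨H, hH⟩ := exists_addSubgroup_coe_eq_sub_self h_doubling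
  obtain ⟨c, hc⟩ : X.Nonempty := card_pos.1 (by omega)
  refine ⟨H, ?_, ?_⟩
  · have h_card : #X ≤ Nat.card H := by
      have h_eq : Nat.card H = #(X - X) := by
        rw [← Set.ncard_coe_finset, ← hH]
        rfl
      exact h_eq ▸ card_le_card_sub_self
    have h_mul := H.index_mul_card
    rw [Nat.card_eq_fintype_card (α := G)] at h_mul
    by_contra! h_index
    nlinarith
  · rw [hH, coe_subset]
    intro z hz
    obtain ⟨x, hx, y, hy, rfl⟩ := mem_sub.1 hz
    rw [← add_sub_add_right_eq_sub x y c]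
    exact sub_mem_sub (add_mem_add hx hc) (add_mem_add hy hc)

lemma containsLargeSubgroup_of_compl_subset_antiperiods {S D : Finset G} {m : ℕ}
    (hD : 2 * Fintype.card G + 5 * m ≤ 5 * #D)
    (hP : 3 * Fintype.card G < 8 * #(antiperiods D m)) (hS : Sᶜ ⊆ antiperiods D m) :
    ContainsLargeSubgroup S := by
  obtain ⟨H, hH, h_sub⟩ := exists_index_le_two_subset hP
  refine ⟨H, hH, fun x hx ↦ ?_⟩
  by_contra hxS
  exact disjoint_right.1 (disjoint_antiperiods_add_sub_add hD) (h_sub hx)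
    (hS (mem_compl.2 hxS))

lemma card_compl_subset_antiperiods_not_containsLargeSubgroup_le
    [DecidablePred (ContainsLargeSubgroup (G := G))] {D : Finset G} {m : ℕ}
    (hD : 2 * Fintype.card G + 5 * m ≤ 5 * #D) :
    #{S : Finset G | Sᶜ ⊆ antiperiods D m ∧ ¬ContainsLargeSubgroup S} ≤
      2 ^ (3 * Fintype.card G / 8) := by
  obtain hP | hP := lt_or_ge (3 * Fintype.card G) (8 * #(antiperiods D m))
  · rw [card_eq_zero.2 (filter_eq_empty_iff.2 fun S _ hS ↦
      hS.2 (containsLargeSubgroup_of_compl_subset_antiperiods hD hP hS.1))]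
    exact Nat.zero_le _
  · calc #{S : Finset G | Sᶜ ⊆ antiperiods D m ∧ ¬ContainsLargeSubgroup S}
        ≤ #((antiperiods D m).powerset) :=
          card_le_card_of_injOn compl (fun S hS ↦ mem_powerset.2 (mem_filter.1 hS).2.1)
            compl_injective.injOn
      _ ≤ 2 ^ (3 * Fintype.card G / 8) := by
        rw [card_powerset]
        exact Nat.pow_le_pow_right two_pos (by omega)

end AddCommGroup

section CharTwo

open Finset

variable {G : Type*} [AddCommGroup G] [Module (ZMod 2) G] [DecidableEq G]

lemma sub_self_eq_add_self (A : Finset G) : A - A = A + A := by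
  ext x
  simp only [mem_sub, mem_add, ZModModule.sub_eq_add]

variable [Fintype G] {Q : ℕ}

lemma card_sumsetsWithin_not_compl_subset_antiperiods_le {D : Finset G} (hD : #D ≤ 8224 * Q) :
    #{S ∈ sumsetsWithin D | ¬Sᶜ ⊆ antiperiods D (1024 * Q)} ≤
      Fintype.card G * 2 ^ (8096 * Q) := by
  have h_cover : {S ∈ sumsetsWithin D | ¬Sᶜ ⊆ antiperiods D (1024 * Q)} ⊆
      (antiperiods D (1024 * Q))ᶜ.biUnion fun t ↦ (differenceFree D t).image fun A ↦ A + A := by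
    intro S hS
    obtain ⟨hSD, h_not⟩ := mem_filter.1 hS
    obtain ⟨A, hAD, rfl⟩ := mem_sumsetsWithin.1 hSD
    obtain ⟨t, htA, ht⟩ := not_subset.1 h_not
    refine mem_biUnion.2 ⟨t, mem_compl.2 ht, mem_image_of_mem _ (mem_differenceFree.2 ⟨hAD, ?_⟩)⟩
    rwa [sub_self_eq_add_self, ← mem_compl]
  refine (card_le_card h_cover).trans ((card_biUnion_le_card_mul _ _ _ fun t ht ↦ ?_).trans
    (Nat.mul_le_mul_right _ (card_le_univ _)))
  rw [mem_compl, mem_antiperiods, not_lt] at ht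
  exact card_image_le.trans (card_differenceFree_le_two_pow (ZModModule.add_self t) hD ht)

-- Either `(A + A)ᶜ` is small, or `A` lies in a container for some `k`-element `T ⊆ (A + A)ᶜ`.
lemma sumsetsWithin_univ_subset_union_biUnion_container {φ q k : ℕ} (hφ : 0 < φ)
    (hG : Fintype.card G ≤ φ * q) (hk : k ≤ q) :
    sumsetsWithin (univ : Finset G) ⊆
      ({T : Finset G | #T ≤ q} : Finset (Finset G)).image compl ∪
        (({T : Finset G | #T = k} : Finset (Finset G)) ×ˢ
          ({F : Finset G | #F ≤ q} : Finset (Finset G))).biUnion fun p ↦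
            sumsetsWithin (container p.1 φ p.2) := by
  intro S hS
  obtain ⟨A, -, rfl⟩ := mem_sumsetsWithin.1 hS
  obtain h_small | h_large := le_total #(A + A)ᶜ k
  · exact mem_union_left _ (mem_image.2
      ⟨(A + A)ᶜ, mem_filter.2 ⟨mem_univ _, h_small.trans hk⟩, compl_compl _⟩)
  · obtain ⟨T, hTA, hT⟩ := exists_subset_card_eq h_large
    have h_disj : Disjoint (A - A) T := by
      rw [sub_self_eq_add_self]
      exact disjoint_compl_right.mono_right hTA
    obtain ⟨F, hF, hAF⟩ := exists_subset_container φ h_disj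
    refine mem_union_right _ (mem_biUnion.2 ⟨(T, F), mem_product.2
      ⟨mem_filter.2 ⟨mem_univ T, hT⟩, mem_filter.2 ⟨mem_univ F, ?_⟩⟩,
      mem_sumsetsWithin.2 ⟨A, hAF, rfl⟩⟩)
    exact Nat.le_of_mul_le_mul_left (hF.trans hG) hφ

section Sumsets

variable [DecidablePred (ContainsLargeSubgroup (G := G))]

lemma card_sumsetsWithin_not_containsLargeSubgroup_le (hG : Fintype.card G = 2 ^ 14 * Q)
    {D : Finset G} (hD : #D ≤ 8224 * Q) :
    #{S ∈ sumsetsWithin D | ¬ContainsLargeSubgroup S} ≤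
      (Fintype.card G + 1) * 2 ^ (8096 * Q) := by
  obtain h_small | h_large := lt_or_ge (5 * #D) (2 * Fintype.card G + 5 * (1024 * Q))
  · calc #{S ∈ sumsetsWithin D | ¬ContainsLargeSubgroup S}
        ≤ 2 ^ #D := (card_filter_le _ _).trans (card_sumsetsWithin_le D)
      _ ≤ 2 ^ (8096 * Q) := Nat.pow_le_pow_right two_pos (by omega)
      _ ≤ (Fintype.card G + 1) * 2 ^ (8096 * Q) := Nat.le_mul_of_pos_left _ (Nat.succ_pos _)
  have h_cover : {S ∈ sumsetsWithin D | ¬ContainsLargeSubgroup S} ⊆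
      {S ∈ sumsetsWithin D | ¬Sᶜ ⊆ antiperiods D (1024 * Q)} ∪
        univ.filter fun S ↦ Sᶜ ⊆ antiperiods D (1024 * Q) ∧ ¬ContainsLargeSubgroup S := by
    intro S hS
    simp only [mem_filter, mem_union, mem_univ, true_and] at hS ⊢
    tauto
  calc #{S ∈ sumsetsWithin D | ¬ContainsLargeSubgroup S}
      ≤ Fintype.card G * 2 ^ (8096 * Q) + 2 ^ (3 * Fintype.card G / 8) :=
        (card_le_card h_cover).trans <| (card_union_le _ _).trans <| add_le_add
          (card_sumsetsWithin_not_compl_subset_antiperiods_le hD)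
          (card_compl_subset_antiperiods_not_containsLargeSubgroup_le h_large)
    _ ≤ Fintype.card G * 2 ^ (8096 * Q) + 2 ^ (8096 * Q) :=
      Nat.add_le_add_left (Nat.pow_le_pow_right two_pos (by omega)) _
    _ = (Fintype.card G + 1) * 2 ^ (8096 * Q) := by ring

lemma card_sumsetsWithin_univ_not_containsLargeSubgroup_le (hG : Fintype.card G = 2 ^ 14 * Q)
    (hQ : 2 ^ 22 ≤ Q) :
    #{S ∈ sumsetsWithin (univ : Finset G) | ¬ContainsLargeSubgroup S} ≤
      (Fintype.card G + 2) * 2 ^ (8160 * Q) := by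
  have h_small := card_filter_card_le_le_two_pow hG
  have h_fixed : #{T : Finset G | #T = 2 ^ 22} ≤ 2 ^ (32 * Q) :=
    (card_le_card fun T hT ↦ mem_filter.2
      ⟨mem_univ T, (mem_filter.1 hT).2.le.trans hQ⟩).trans h_small
  have h_cover := filter_subset_filter (¬ContainsLargeSubgroup ·)
    (sumsetsWithin_univ_subset_union_biUnion_container (G := G) (by positivity) hG.le hQ)
  rw [filter_union, filter_biUnion] at h_cover
  calc #{S ∈ sumsetsWithin (univ : Finset G) | ¬ContainsLargeSubgroup S}
      ≤ 2 ^ (32 * Q) +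
        2 ^ (32 * Q) * 2 ^ (32 * Q) * ((Fintype.card G + 1) * 2 ^ (8096 * Q)) := by
        refine (card_le_card h_cover).trans ((card_union_le _ _).trans (add_le_add
          ((card_filter_le _ _).trans (card_image_le.trans h_small))
          ((card_biUnion_le_card_mul _ _ ((Fintype.card G + 1) * 2 ^ (8096 * Q))
            fun p hp ↦ ?_).trans ?_)))
        · have h_container := two_mul_card_mul_card_container_le p.1 p.2 (2 ^ 14)
          rw [(mem_filter.1 (mem_product.1 hp).1).2, hG] at h_container
          exact card_sumsetsWithin_not_containsLargeSubgroup_le hG (by omega)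
        · rw [card_product]
          gcongr
    _ = 2 ^ (32 * Q) + (Fintype.card G + 1) * 2 ^ (8160 * Q) := by
      rw [show 8160 * Q = 32 * Q + 32 * Q + 8096 * Q by ring, pow_add, pow_add]
      ring
    _ ≤ 2 ^ (8160 * Q) + (Fintype.card G + 1) * 2 ^ (8160 * Q) :=
      Nat.add_le_add_right (Nat.pow_le_pow_right two_pos (by omega)) _
    _ = (Fintype.card G + 2) * 2 ^ (8160 * Q) := by ring

end Sumsets

lemma card_differenceFree_notMem_le (hG : Fintype.card G = 2 ^ 14 * Q) {K : AddSubgroup G}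
    [DecidablePred (· ∈ K)] (hK : K.index = 2) {t : G} (ht : t ∈ K) :
    #(differenceFree {x : G | x ∉ K} t) ≤ 2 ^ (8096 * Q) := by
  have h_card := card_filter_notMem_of_index_two hK
  have h_invariant : t +ᵥ ({x : G | x ∉ K} : Finset G) = ({x : G | x ∉ K} : Finset G) := by
    ext x
    simp only [mem_vadd_finset_iff_sub_mem, mem_filter, mem_univ, true_and,
      ZModModule.sub_eq_add, K.add_mem_cancel_right ht]
  refine card_differenceFree_le_two_pow (ZModModule.add_self t) (by omega) ?_
  rw [h_invariant, inter_self]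
  omega

lemma card_addSubgroup_subset_notMem_sumsetsWithin_univ_le (hG : Fintype.card G = 2 ^ 14 * Q)
    {K : AddSubgroup G} [DecidablePred (· ∈ K)] (hK : K.index = 2) :
    #{S : Finset G | (∀ x ∈ K, x ∈ S) ∧ S ∉ sumsetsWithin univ} ≤
      Fintype.card G * 2 ^ (8096 * Q) := by
  have h_cover : ({S : Finset G | (∀ x ∈ K, x ∈ S) ∧ S ∉ sumsetsWithin univ} : Finset _) ⊆
      ({t : G | t ∈ K} : Finset G).biUnion fun t ↦
        (differenceFree {x : G | x ∉ K} t).image fun B ↦ ({x : G | x ∈ K} : Finset G) ∪ B := by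
    intro S hS
    obtain ⟨hKS, h_not⟩ := (mem_filter.1 hS).2
    obtain ⟨t, htK, ht⟩ : ∃ t ∈ K, t ∉ ({y ∈ S | y ∉ K} : Finset G) + {y ∈ S | y ∉ K} := by
      by_contra! h
      exact h_not (mem_sumsetsWithin.2
        ⟨_, subset_univ _, insert_zero_add_insert_zero_eq hK hKS h⟩)
    refine mem_biUnion.2 ⟨t, by simpa using htK, mem_image.2 ⟨{y ∈ S | y ∉ K},
      mem_differenceFree.2 ⟨filter_subset_filter _ (subset_univ S), ?_⟩, ?_⟩⟩
    · rwa [sub_self_eq_add_self]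
    · ext x
      have := hKS x
      simp only [mem_union, mem_filter, mem_univ, true_and]
      tauto
  refine (card_le_card h_cover).trans ((card_biUnion_le_card_mul _ _ _ fun t ht ↦ ?_).trans
    (Nat.mul_le_mul_right _ (card_le_univ _)))
  exact card_image_le.trans (card_differenceFree_notMem_le hG hK (mem_filter.1 ht).2)

end CharTwo

section Hyperplanes

open Finset

variable {n : ℕ}

/-- The hyperplane `v^⊥` as a subgroup, with an index to compare with `ContainsLargeSubgroup`. -/
def perpSubgroup (v : V n) : AddSubgroup (V n) :=
  (LinearMap.ker (dotProductEquiv (ZMod 2) (Fin n) v)).toAddSubgroup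

lemma mem_perp_iff_mem_perpSubgroup {v x : V n} : x ∈ perp v ↔ x ∈ perpSubgroup v := by
  simp [perp, perpSubgroup, dotProduct, mul_comm]

lemma coe_perp (v : V n) : (perp v : Set (V n)) = perpSubgroup v :=
  Set.ext fun _ ↦ mem_perp_iff_mem_perpSubgroup

lemma index_perpSubgroup {v : V n} (hv : v ≠ 0) : (perpSubgroup v).index = 2 := by
  have h_surj : Function.Surjective (dotProductEquiv (ZMod 2) (Fin n) v) :=
    LinearMap.surjective ((LinearEquiv.map_ne_zero_iff _).2 hv)
  calc (perpSubgroup v).index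
      = Nat.card (dotProductEquiv (ZMod 2) (Fin n) v).toAddMonoidHom.range :=
        AddSubgroup.index_ker (dotProductEquiv (ZMod 2) (Fin n) v).toAddMonoidHom
    _ = 2 := by
      rw [AddMonoidHom.range_eq_top.2 h_surj, AddSubgroup.card_top, Nat.card_zmod]

lemma exists_le_perpSubgroup {H : AddSubgroup (V n)} (hH : H ≠ ⊤) :
    ∃ v : V n, v ≠ 0 ∧ H ≤ perpSubgroup v := by
  have h_lt : AddSubgroup.toZModSubmodule 2 H < ⊤ := by
    rw [← OrderIso.map_top (AddSubgroup.toZModSubmodule 2), OrderIso.lt_iff_lt]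
    exact hH.lt_top
  obtain ⟨f, hf, hHf⟩ := Submodule.exists_le_ker_of_lt_top _ h_lt
  refine ⟨(dotProductEquiv (ZMod 2) (Fin n)).symm f,
    (LinearEquiv.map_ne_zero_iff _).2 hf, fun x hx ↦ ?_⟩
  rw [perpSubgroup, LinearEquiv.apply_symm_apply]
  exact hHf hx

lemma exists_perpSubgroup_le (hn : n ≠ 0) {H : AddSubgroup (V n)} (hH : H.index ≤ 2) :
    ∃ v : V n, v ≠ 0 ∧ perpSubgroup v ≤ H := by
  obtain rfl | hH_top := eq_or_ne H ⊤
  · have : Nonempty (Fin n) := Fin.pos_iff_nonempty.1 (Nat.pos_of_ne_zero hn)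
    obtain ⟨v, hv⟩ := exists_ne (0 : V n)
    exact ⟨v, hv, le_top⟩
  · obtain ⟨v, hv, hHv⟩ := exists_le_perpSubgroup hH_top
    have h_mul := AddSubgroup.relIndex_mul_index hHv
    rw [index_perpSubgroup hv] at h_mul
    have h_index : H.index ≠ 0 := AddSubgroup.index_ne_zero_of_finite
    exact ⟨v, hv, AddSubgroup.relIndex_eq_one.1 (by omega)⟩

lemma mem_Hfam_iff_containsLargeSubgroup (hn : n ≠ 0) {S : Finset (V n)} :
    S ∈ Hfam n ↔ ContainsLargeSubgroup S := by
  simp only [Hfam, mem_filter, mem_univ, true_and]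
  constructor
  · rintro ⟨v, hv, hvS⟩
    exact ⟨perpSubgroup v, (index_perpSubgroup hv).le, by rwa [← coe_perp, coe_subset]⟩
  · rintro ⟨H, hH, hHS⟩
    obtain ⟨v, hv, hvH⟩ := exists_perpSubgroup_le hn hH
    refine ⟨v, hv, ?_⟩
    rw [← coe_subset, coe_perp]
    exact (SetLike.coe_subset_coe.2 hvH).trans hHS

lemma sumsets_eq_sumsetsWithin_univ (n : ℕ) : sumsets n = sumsetsWithin univ := by
  rw [sumsets, sumsetsWithin, powerset_univ]

lemma card_V (n : ℕ) : Fintype.card (V n) = 2 ^ n := by simp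

variable {Q : ℕ}

lemma card_sumsets_sdiff_Hfam_le (hn : 2 ^ n = 2 ^ 14 * Q) (hQ : 2 ^ 22 ≤ Q) :
    #(sumsets n \ Hfam n) ≤ (2 ^ n + 2) * 2 ^ (8160 * Q) := by
  classical
  have hn₀ : n ≠ 0 := by
    rintro rfl
    omega
  calc #(sumsets n \ Hfam n)
      = #{S ∈ sumsetsWithin (univ : Finset (V n)) | ¬ContainsLargeSubgroup S} := by
        congr 1
        ext S
        rw [mem_sdiff, mem_filter, sumsets_eq_sumsetsWithin_univ,
          mem_Hfam_iff_containsLargeSubgroup hn₀]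
    _ ≤ (Fintype.card (V n) + 2) * 2 ^ (8160 * Q) :=
      card_sumsetsWithin_univ_not_containsLargeSubgroup_le (by rw [card_V, hn]) hQ
    _ = (2 ^ n + 2) * 2 ^ (8160 * Q) := by rw [card_V]

lemma card_Hfam_sdiff_sumsets_le (hn : 2 ^ n = 2 ^ 14 * Q) :
    #(Hfam n \ sumsets n) ≤ 2 ^ n * (2 ^ n * 2 ^ (8096 * Q)) := by
  classical
  have h_cover : Hfam n \ sumsets n ⊆ ({v | v ≠ 0} : Finset (V n)).biUnion fun v ↦
      {S : Finset (V n) | (∀ x ∈ perpSubgroup v, x ∈ S) ∧ S ∉ sumsetsWithin univ} := by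
    intro S hS
    obtain ⟨hS, h_not⟩ := mem_sdiff.1 hS
    obtain ⟨v, hv, hvS⟩ := (mem_filter.1 hS).2
    rw [sumsets_eq_sumsetsWithin_univ] at h_not
    exact mem_biUnion.2 ⟨v, by simpa using hv, mem_filter.2
      ⟨mem_univ S, fun x hx ↦ hvS (mem_perp_iff_mem_perpSubgroup.2 hx), h_not⟩⟩
  refine (card_le_card h_cover).trans ((card_biUnion_le_card_mul _ _ _ fun v hv ↦ ?_).trans
    (Nat.mul_le_mul_right _ ((card_le_univ _).trans_eq (card_V n))))
  rw [← card_V]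
  exact card_addSubgroup_subset_notMem_sumsetsWithin_univ_le (by rw [card_V, hn])
    (index_perpSubgroup (mem_filter.1 hv).2)

lemma two_pow_le_card_Hfam (hn : 2 ^ n = 2 ^ 14 * Q) (hn₀ : n ≠ 0) :
    2 ^ (8192 * Q) ≤ #(Hfam n) := by
  classical
  have : Nonempty (Fin n) := Fin.pos_iff_nonempty.1 (Nat.pos_of_ne_zero hn₀)
  obtain ⟨v, hv⟩ := exists_ne (0 : V n)
  have h_card : 2 * #(perp v)ᶜ = 2 ^ n := by
    rw [← card_V, ← card_filter_notMem_of_index_two (index_perpSubgroup hv)]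
    congr 2
    ext x
    simp [mem_perp_iff_mem_perpSubgroup]
  calc 2 ^ (8192 * Q) = 2 ^ #(perp v)ᶜ := by congr 1; omega
    _ = #(Icc (perp v) univ) := by rw [card_Icc_finset (subset_univ _), card_compl, card_univ]
    _ ≤ #(Hfam n) := card_le_card fun S hS ↦
      mem_filter.2 ⟨mem_univ S, v, hv, (mem_Icc.1 hS).1⟩

lemma two_pow_mul_card_symmDiff_le_card_Hfam (hn : 36 ≤ n) :
    2 ^ n * #((sumsets n \ Hfam n) ∪ (Hfam n \ sumsets n)) ≤ #(Hfam n) := by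
  obtain ⟨Q, hQ⟩ : ∃ Q, Q = 2 ^ (n - 14) := ⟨_, rfl⟩
  have hnQ : 2 ^ n = 2 ^ 14 * Q := by rw [hQ, ← pow_add]; congr 1; omega
  have hQ_ge : 2 ^ 22 ≤ Q := hQ ▸ Nat.pow_le_pow_right two_pos (by omega)
  have hn_lt : n - 14 < Q := hQ ▸ Nat.lt_two_pow_self
  calc 2 ^ n * #((sumsets n \ Hfam n) ∪ (Hfam n \ sumsets n))
      ≤ 2 ^ n * ((2 ^ n + 2) * 2 ^ (8160 * Q) + 2 ^ n * (2 ^ n * 2 ^ (8096 * Q))) :=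
        Nat.mul_le_mul_left _ ((card_union_le _ _).trans (add_le_add
          (card_sumsets_sdiff_Hfam_le hnQ hQ_ge) (card_Hfam_sdiff_sumsets_le hnQ)))
    _ ≤ 2 ^ n * (2 ^ n * 2 ^ n * 2 ^ (8160 * Q) + 2 ^ n * (2 ^ n * 2 ^ (8160 * Q))) := by
      have h_four : 4 ≤ 2 ^ n := Nat.pow_le_pow_right two_pos (show 2 ≤ n by omega)
      gcongr
      · nlinarith [h_four]
      · exact one_le_two
      · norm_num
    _ = 2 ^ (3 * n + 1 + 8160 * Q) := by ring
    _ ≤ 2 ^ (8192 * Q) := Nat.pow_le_pow_right two_pos (by omega)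
    _ ≤ #(Hfam n) := two_pow_le_card_Hfam hnQ (by omega)

end Hyperplanes

/-- `|𝒮ₙ Δ ℋₙ| = o(|𝒮ₙ|)`. -/
theorem symmDiff_sumsets_Hfam_small :
    ∀ ε : ℝ, 0 < ε → ∃ n₀ : ℕ, ∀ n : ℕ, n₀ ≤ n →
      (((sumsets n \ Hfam n) ∪ (Hfam n \ sumsets n)).card : ℝ) ≤ ε * (sumsets n).card := by
  intro ε hε
  obtain ⟨K, hK⟩ := exists_nat_ge ((1 + ε) / ε)
  refine ⟨max 36 K, fun n hn ↦ ?_⟩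
  have hKn : (K : ℝ) ≤ 2 ^ n :=
    mod_cast (le_of_max_le_right hn).trans Nat.lt_two_pow_self.le
  refine card_symmDiff_le_mul_card (K := 2 ^ n) hε.le ?_
    (mod_cast two_pow_mul_card_symmDiff_le_card_Hfam (le_of_max_le_left hn))
  rw [← div_le_iff₀' hε]
  exact hK.trans hKn
end

section
/- For all n ≥ 1, the number of sumsets in F₂ⁿ satisfies |𝒮ₙ| ≥ 2^(2^(n−1)). -/
open Pointwise

/-!
If `T` is sum-free and `S ⊆ T`, then `A = {0} ∪ S` has sumset `A + A = {0} ∪ S ∪ (S + S)`, which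
meets `T` exactly in `S`. So distinct subsets of `T` give distinct sumsets, and there are at least
`2 ^ |T|` of them. In `F₂ⁿ` the affine hyperplane `x₀ = 1` is sum-free of size `2 ^ (n - 1)`.
-/

/-- A finite set `T` is sum-free if no element of `T` is a sum of two (possibly equal) elements
of `T`. Each subset of such a set can be read off from a sumset. -/
def IsSumFree {G : Type*} [Add G] [DecidableEq G] (T : Finset G) : Prop :=
  Disjoint (T + T) T

section SumFree

variable {G : Type*} [AddZeroClass G] [DecidableEq G] {T : Finset G}

theorem IsSumFree.zero_notMem (hT : IsSumFree T) : (0 : G) ∉ T := fun h0 =>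
  Finset.disjoint_left.1 hT (Finset.mem_add.2 ⟨0, h0, 0, h0, add_zero 0⟩) h0

theorem insert_zero_add_insert_zero (S : Finset G) :
    insert 0 S + insert 0 S = insert 0 (S ∪ (S + S)) := by
  simp only [Finset.insert_eq, Finset.union_add, Finset.add_union, Finset.singleton_zero,
    zero_add, add_zero]
  grind

theorem IsSumFree.inter_insert_zero_add_insert_zero {S : Finset G} (hT : IsSumFree T)
    (hS : S ⊆ T) : T ∩ (insert 0 S + insert 0 S) = S := by
  have hSS : T ∩ (S + S) = ∅ :=
    Finset.disjoint_iff_inter_eq_empty.1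
      (Disjoint.mono_left (Finset.add_subset_add hS hS) hT).symm
  rw [insert_zero_add_insert_zero, Finset.inter_insert_of_notMem hT.zero_notMem,
    Finset.inter_union_distrib_left, hSS, Finset.union_empty, Finset.inter_eq_right.2 hS]

theorem IsSumFree.injOn_insert_zero_add_insert_zero (hT : IsSumFree T) :
    Set.InjOn (fun S : Finset G => insert 0 S + insert 0 S) T.powerset := by
  intro S hS S' hS' h
  rw [Finset.mem_coe, Finset.mem_powerset] at hS hS'
  rw [← hT.inter_insert_zero_add_insert_zero hS, ← hT.inter_insert_zero_add_insert_zero hS']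
  exact congrArg (T ∩ ·) h

theorem sumset_count_lower_general [Fintype G] (hT : IsSumFree T) :
    2 ^ T.card ≤ (Finset.univ.image fun A : Finset G => A + A).card := by
  rw [← Finset.card_powerset]
  exact Finset.card_le_card_of_injOn _
    (fun S _ => Finset.mem_image_of_mem (fun A : Finset G => A + A) (Finset.mem_univ (insert 0 S)))
    hT.injOn_insert_zero_add_insert_zero

end SumFree

theorem isSumFree_filter_map_eq {G H : Type*} [Add G] [Add H] [Fintype G] [DecidableEq G]
    [DecidableEq H] (φ : G →ₙ+ H) {b : H} (hb : b + b ≠ b) :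
    IsSumFree (Finset.univ.filter fun x => φ x = b) := by
  rw [IsSumFree, Finset.disjoint_left]
  intro z hz hzb
  obtain ⟨x, hx, y, hy, rfl⟩ := Finset.mem_add.1 hz
  rw [Finset.mem_filter_univ] at hx hy hzb
  exact hb (by rwa [map_add, hx, hy] at hzb)

theorem card_filter_apply_eq {ι α : Type*} [Fintype ι] [DecidableEq ι] [Fintype α]
    [DecidableEq α] (i : ι) (a : α) :
    (Finset.univ.filter fun x : ι → α => x i = a).card = Fintype.card α ^ (Fintype.card ι - 1) := by
  simpa only [Fintype.piFinset_univ, Finset.card_univ] using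
    Fintype.card_filter_piFinset_const_eq_of_mem Finset.univ i (Finset.mem_univ a)

/-- `|𝒮ₙ| ≥ 2^(2^(n−1))` for all `n ≥ 1`. -/
theorem sumset_count_lower (n : ℕ) (hn : 1 ≤ n) :
    2 ^ 2 ^ (n - 1) ≤ (sumsets n).card := by
  have hcard : (Finset.univ.filter fun x : V n => x ⟨0, hn⟩ = 1).card = 2 ^ (n - 1) := by
    rw [card_filter_apply_eq, ZMod.card, Fintype.card_fin]
  exact hcard ▸ sumset_count_lower_general
    (isSumFree_filter_map_eq (Pi.evalAddHom (fun _ : Fin n => ZMod 2) ⟨0, hn⟩) (by decide))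
end

section
/- For all n ≥ 2, the family ℋₙ satisfies (2ⁿ−1)·2^(2^(n−1)) − 2^(2n−1+2^(n−2)) ≤ |ℋₙ| ≤ (2ⁿ−1)·2^(2^(n−1)). In particular, |ℋₙ| ~ (2ⁿ−1)·2^(2^(n−1)). -/
section

open Finset Filter Asymptotics

section Bonferroni

variable {ι α : Type*} [DecidableEq α]

theorem sum_offDiag_card_inter_eq_sum_card_offDiag (s : Finset ι) (A : ι → Finset α) :
    ∑ p ∈ s.offDiag, #(A p.1 ∩ A p.2) =
      ∑ x ∈ s.biUnion A, #({i ∈ s | x ∈ A i} : Finset ι).offDiag := by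
  convert! sum_card_bipartiteAbove_eq_sum_card_bipartiteBelow (s := s.offDiag)
    (t := s.biUnion A) (fun p x ↦ x ∈ A p.1 ∧ x ∈ A p.2) using 3 with p hp x hx
  · grind [bipartiteAbove]
  · grind [bipartiteBelow]

theorem two_mul_sum_card_le_two_mul_card_biUnion_add (s : Finset ι) (A : ι → Finset α) :
    2 * ∑ i ∈ s, #(A i) ≤
      2 * #(s.biUnion A) + ∑ p ∈ s.offDiag, #(A p.1 ∩ A p.2) := by
  have two_mul_le (k : ℕ) : 2 * k ≤ 2 + (k * k - k) := by
    obtain hk | hk := le_or_gt k 2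
    · interval_cases k <;> simp
    · have : 3 * k ≤ k * k := Nat.mul_le_mul_right k hk
      omega
  have sum_card_eq : ∑ i ∈ s, #(A i) = ∑ x ∈ s.biUnion A, #{i ∈ s | x ∈ A i} := by
    convert! sum_card_bipartiteAbove_eq_sum_card_bipartiteBelow (s := s) (t := s.biUnion A)
      (fun i x ↦ x ∈ A i) using 3 with i hi
    grind [bipartiteAbove]
  -- A point lying in exactly `k` of the sets contributes `2 * k` on the left and
  -- `2 + k * (k - 1)` on the right.
  calc 2 * ∑ i ∈ s, #(A i) = ∑ x ∈ s.biUnion A, 2 * #{i ∈ s | x ∈ A i} := by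
        rw [sum_card_eq, mul_sum]
    _ ≤ ∑ x ∈ s.biUnion A, (2 + #({i ∈ s | x ∈ A i} : Finset ι).offDiag) := by
        gcongr with x
        rw [offDiag_card]
        exact two_mul_le _
    _ = 2 * #(s.biUnion A) + ∑ p ∈ s.offDiag, #(A p.1 ∩ A p.2) := by
        rw [sum_add_distrib, sum_const, smul_eq_mul, mul_comm,
          sum_offDiag_card_inter_eq_sum_card_offDiag]

end Bonferroni

theorem card_Ici_finset {α : Type*} [Fintype α] [DecidableEq α] (T : Finset α) :
    #(Ici T) = 2 ^ #Tᶜ := by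
  rw [← Icc_top, top_eq_univ, card_Icc_finset (subset_univ T), card_compl, card_univ]

section LinearSystem

open Matrix

variable {K m k : Type*} [Field K] [Fintype k] {A : Matrix m k K}

theorem mulVec_surjective_of_linearIndependent_row [Finite m] (hA : LinearIndependent K A.row) :
    Function.Surjective A.mulVec := by
  cases nonempty_fintype m
  suffices A.mulVecLin.range = ⊤ from LinearMap.range_eq_top.1 this
  apply Submodule.eq_top_of_finrank_eq
  rw [Module.finrank_fintype_fun_eq_card, ← hA.rank_matrix, Matrix.rank]

theorem card_mulVec_eq [Fintype m] [Fintype K] [DecidableEq K] [DecidableEq k]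
    (hA : LinearIndependent K A.row) (b : m → K) :
    #{x | A *ᵥ x = b} = Fintype.card K ^ (Fintype.card k - Fintype.card m) := by
  classical
  have fiber_card (c : m → K) : #{x | A *ᵥ x = c} = #{x | A *ᵥ x = b} :=
    AddMonoidHom.card_fiber_eq_of_mem_range A.mulVecLin
      (mulVec_surjective_of_linearIndependent_row hA c)
      (mulVec_surjective_of_linearIndependent_row hA b)
  have card_le : Fintype.card m ≤ Fintype.card k := by
    simpa using hA.fintype_card_le_finrank
  have total : Fintype.card K ^ Fintype.card m * #{x | A *ᵥ x = b} =
      Fintype.card K ^ Fintype.card k := by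
    calc _ = ∑ c : m → K, #{x | A *ᵥ x = c} := by simp [fiber_card]
      _ = #(univ : Finset (k → K)) :=
        (card_eq_sum_card_fiberwise fun _ _ ↦ mem_univ _).symm
      _ = Fintype.card K ^ Fintype.card k := by rw [card_univ, Fintype.card_fun]
  rw [← pow_mul_pow_sub _ card_le] at total
  exact Nat.eq_of_mul_eq_mul_left (by positivity) total

end LinearSystem

variable {n : ℕ}

theorem linearIndependent_pair_of_ne {v w : V n} (hv : v ≠ 0) (hw : w ≠ 0) (hvw : v ≠ w) :
    LinearIndependent (ZMod 2) ![v, w] := by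
  refine (LinearIndependent.pair_iff' hv).2 fun a ↦ ?_
  obtain rfl | rfl : a = 0 ∨ a = 1 := by decide +revert
  · simpa using hw.symm
  · simpa using hvw

theorem card_compl_biUnion_perp {ι : Type*} [Fintype ι] {v : ι → V n}
    (hv : LinearIndependent (ZMod 2) v) :
    #(univ.biUnion fun i ↦ perp (v i))ᶜ = 2 ^ (n - Fintype.card ι) := by
  have compl_eq : (univ.biUnion fun i ↦ perp (v i))ᶜ =
      ({x | (Matrix.of v).mulVec x = 1} : Finset (V n)) := by
    have ne_zero_iff (a : ZMod 2) : a ≠ 0 ↔ a = 1 := by decide +revert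
    ext x
    simp [perp, funext_iff, Matrix.mulVec, dotProduct, mul_comm, ← ne_zero_iff]
  rw [compl_eq, card_mulVec_eq (A := Matrix.of v) hv, ZMod.card, Fintype.card_fin]

theorem card_compl_perp {v : V n} (hv : v ≠ 0) : #(perp v)ᶜ = 2 ^ (n - 1) := by
  simpa using card_compl_biUnion_perp (v := fun _ : Unit ↦ v) (.of_subsingleton () hv)

theorem card_compl_perp_union_perp {v w : V n} (hv : v ≠ 0) (hw : w ≠ 0) (hvw : v ≠ w) :
    #(perp v ∪ perp w)ᶜ = 2 ^ (n - 2) := by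
  simpa [Fin.univ_succ] using card_compl_biUnion_perp (linearIndependent_pair_of_ne hv hw hvw)

theorem Hfam_eq_biUnion_Ici_perp (n : ℕ) :
    Hfam n = ({0}ᶜ : Finset (V n)).biUnion fun v ↦ Ici (perp v) := by
  ext S
  simp [Hfam]

theorem card_compl_singleton_zero (n : ℕ) : #({0}ᶜ : Finset (V n)) = 2 ^ n - 1 := by
  simp [card_compl]

theorem sum_card_Ici_perp (n : ℕ) :
    ∑ v ∈ ({0}ᶜ : Finset (V n)), #(Ici (perp v)) = (2 ^ n - 1) * 2 ^ 2 ^ (n - 1) := by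
  rw [sum_const_nat fun v hv ↦ ?_, card_compl_singleton_zero]
  rw [card_Ici_finset, card_compl_perp (by simpa using hv)]

theorem sum_card_Ici_perp_inter_le (n : ℕ) :
    ∑ p ∈ ({0}ᶜ : Finset (V n)).offDiag, #(Ici (perp p.1) ∩ Ici (perp p.2)) ≤
      2 * 2 ^ (2 * n - 1 + 2 ^ (n - 2)) := by
  have card_inter (p) (hp : p ∈ ({0}ᶜ : Finset (V n)).offDiag) :
      #(Ici (perp p.1) ∩ Ici (perp p.2)) = 2 ^ 2 ^ (n - 2) := by
    obtain ⟨hv, hw, hvw⟩ := mem_offDiag.1 hp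
    have inter_eq : Ici (perp p.1) ∩ Ici (perp p.2) = Ici (perp p.1 ∪ perp p.2) := by
      ext S
      simp [union_subset_iff]
    rw [inter_eq, card_Ici_finset,
      card_compl_perp_union_perp (by simpa using hv) (by simpa using hw) hvw]
  calc _ = #({0}ᶜ : Finset (V n)).offDiag * 2 ^ 2 ^ (n - 2) := sum_const_nat card_inter
    _ ≤ 2 ^ (2 * n) * 2 ^ 2 ^ (n - 2) := by
        rw [offDiag_card, card_compl_singleton_zero, two_mul, pow_add]
        gcongr
        exact (Nat.sub_le _ _).trans (Nat.mul_le_mul (Nat.sub_le _ _) (Nat.sub_le _ _))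
    _ ≤ 2 ^ (1 + (2 * n - 1)) * 2 ^ 2 ^ (n - 2) := by
        gcongr
        · norm_num
        · omega
    _ = 2 * 2 ^ (2 * n - 1 + 2 ^ (n - 2)) := by ring

theorem card_Hfam_le (n : ℕ) :
    (#(Hfam n) : ℝ) ≤ ((2 : ℝ) ^ n - 1) * 2 ^ 2 ^ (n - 1) := by
  have union_bound : #(Hfam n) ≤ (2 ^ n - 1) * 2 ^ 2 ^ (n - 1) := by
    rw [Hfam_eq_biUnion_Ici_perp, ← sum_card_Ici_perp]
    exact card_biUnion_le
  simpa [Nat.one_le_two_pow] using (Nat.cast_le (α := ℝ)).2 union_bound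

theorem le_card_Hfam_add (n : ℕ) :
    ((2 : ℝ) ^ n - 1) * 2 ^ 2 ^ (n - 1) ≤ #(Hfam n) + 2 ^ (2 * n - 1 + 2 ^ (n - 2)) := by
  have lower_bound : (2 ^ n - 1) * 2 ^ 2 ^ (n - 1) ≤
      #(Hfam n) + 2 ^ (2 * n - 1 + 2 ^ (n - 2)) := by
    have bonferroni :=
      two_mul_sum_card_le_two_mul_card_biUnion_add ({0}ᶜ : Finset (V n)) fun v ↦ Ici (perp v)
    rw [← Hfam_eq_biUnion_Ici_perp, sum_card_Ici_perp] at bonferroni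
    linarith [sum_card_Ici_perp_inter_le n]
  simpa [Nat.one_le_two_pow] using (Nat.cast_le (α := ℝ)).2 lower_bound

theorem two_pow_mul_bonferroni_error_le (hn : 5 ≤ n) :
    (2 : ℝ) ^ (n - 2) * 2 ^ (2 * n - 1 + 2 ^ (n - 2)) ≤ (2 ^ n - 1) * 2 ^ 2 ^ (n - 1) := by
  have exponent_le : n - 2 + (2 * n - 1 + 2 ^ (n - 2)) ≤ n - 1 + 2 ^ (n - 1) := by
    obtain ⟨d, rfl⟩ := Nat.exists_eq_add_of_le' (show 4 ≤ n by omega)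
    have : d < 2 ^ d := Nat.lt_two_pow_self
    simp only [show d + 4 - 2 = d + 2 by omega, show d + 4 - 1 = d + 3 by omega, pow_succ]
    omega
  have two_pow_pred_le : (2 : ℝ) ^ (n - 1) ≤ 2 ^ n - 1 := by
    have : (1 : ℝ) ≤ 2 ^ (n - 1) := one_le_pow₀ one_le_two
    rw [← pow_sub_one_mul (by omega : n ≠ 0)]
    linarith
  calc (2 : ℝ) ^ (n - 2) * 2 ^ (2 * n - 1 + 2 ^ (n - 2))
      ≤ 2 ^ (n - 1) * 2 ^ 2 ^ (n - 1) := by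
        rw [← pow_add, ← pow_add]
        exact pow_le_pow_right₀ one_le_two exponent_le
    _ ≤ (2 ^ n - 1) * 2 ^ 2 ^ (n - 1) := by gcongr

theorem bonferroni_error_isLittleO :
    (fun n : ℕ ↦ (2 : ℝ) ^ (2 * n - 1 + 2 ^ (n - 2))) =o[atTop]
      fun n : ℕ ↦ ((2 : ℝ) ^ n - 1) * 2 ^ 2 ^ (n - 1) := by
  refine isLittleO_iff.2 fun c hc ↦ ?_
  have eventually_le : ∀ᶠ n : ℕ in atTop, c⁻¹ ≤ (2 : ℝ) ^ (n - 2) :=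
    ((tendsto_pow_atTop_atTop_of_one_lt one_lt_two).comp
      (tendsto_sub_atTop_nat 2)).eventually_ge_atTop c⁻¹
  filter_upwards [eventually_ge_atTop 5, eventually_le] with n hn hcn
  rw [Real.norm_of_nonneg (by positivity), ← inv_mul_le_iff₀ hc]
  calc c⁻¹ * (2 : ℝ) ^ (2 * n - 1 + 2 ^ (n - 2))
      ≤ 2 ^ (n - 2) * 2 ^ (2 * n - 1 + 2 ^ (n - 2)) := by gcongr
    _ ≤ (2 ^ n - 1) * 2 ^ 2 ^ (n - 1) := two_pow_mul_bonferroni_error_le hn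
    _ ≤ ‖((2 : ℝ) ^ n - 1) * 2 ^ 2 ^ (n - 1)‖ := Real.le_norm_self _

theorem card_Hfam_isEquivalent :
    (fun n ↦ (#(Hfam n) : ℝ)) ~[atTop] fun n ↦ ((2 : ℝ) ^ n - 1) * 2 ^ 2 ^ (n - 1) := by
  refine IsBigO.trans_isLittleO (.of_bound' (.of_forall fun n ↦ ?_)) bonferroni_error_isLittleO
  have error_nonneg : (0 : ℝ) ≤ 2 ^ (2 * n - 1 + 2 ^ (n - 2)) := by positivity
  rw [Real.norm_of_nonneg error_nonneg, Pi.sub_apply, Real.norm_eq_abs, abs_sub_le_iff]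
  constructor <;> linarith [card_Hfam_le n, le_card_Hfam_add n]

end

/-- For `n ≥ 2`:
`(2ⁿ−1)·2^(2^(n−1)) − 2^(2n−1+2^(n−2)) ≤ |ℋₙ| ≤ (2ⁿ−1)·2^(2^(n−1))`,
and in particular `|ℋₙ| ~ (2ⁿ−1)·2^(2^(n−1))`. -/
theorem Hfam_card_bounds :
    (∀ n : ℕ, 2 ≤ n →
      ((2 : ℝ) ^ n - 1) * 2 ^ 2 ^ (n - 1) - 2 ^ (2 * n - 1 + 2 ^ (n - 2)) ≤
        ((Hfam n).card : ℝ) ∧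
      ((Hfam n).card : ℝ) ≤ ((2 : ℝ) ^ n - 1) * 2 ^ 2 ^ (n - 1)) ∧
    (∀ ε : ℝ, 0 < ε → ∃ n₀ : ℕ, ∀ n : ℕ, n₀ ≤ n →
      (1 - ε) * (((2 : ℝ) ^ n - 1) * 2 ^ 2 ^ (n - 1)) ≤ ((Hfam n).card : ℝ) ∧
      ((Hfam n).card : ℝ) ≤ (1 + ε) * (((2 : ℝ) ^ n - 1) * 2 ^ 2 ^ (n - 1))) := by
  refine ⟨fun n _ ↦ ⟨sub_le_iff_le_add.2 (le_card_Hfam_add n), card_Hfam_le n⟩, fun ε hε ↦ ?_⟩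
  obtain ⟨n₀, hn₀⟩ := Filter.eventually_atTop.1 (card_Hfam_isEquivalent.isLittleO.def hε)
  refine ⟨n₀, fun n hn ↦ ?_⟩
  have main_nonneg : 0 ≤ ((2 : ℝ) ^ n - 1) * 2 ^ 2 ^ (n - 1) :=
    (Nat.cast_nonneg _).trans (card_Hfam_le n)
  have relative_error := hn₀ n hn
  rw [Real.norm_of_nonneg main_nonneg, Pi.sub_apply, Real.norm_eq_abs, abs_le] at relative_error
  constructor <;> linarith
end
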